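/- arXiv:math/0307335 — 2 statements merged into one kernel-verified Lean document; each statement's English description precedes it below -/
import Mathlib

section
/- Let Ω be an open set in ℝ⁴ with an almost complex structure J and let p ∈ Ω. For every λ₀ > 0 there exist an open neighborhood U₀ ⊆ Ω of p and a C^∞ diffeomorphism z from U₀ onto the unit ball 𝔹₂ ⊂ ℂ² such that z(p) = 0, Dz(p) ∘ J(p) ∘ (Dz(p))⁻¹ = J_st, and the pushforward structure Ĵ := z_*(J), defined by Ĵ(w) = Dz(z⁻¹(w)) ∘ J(z⁻¹(w)) ∘ (Dz(z⁻¹(w)))⁻¹ for w ∈ 𝔹₂, extends C² to the closed ball and satisfies ‖Ĵ − J_st‖_{C²(𝔹̄₂)} ≤ λ₀. -/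
open Metric Set Filter Topology Asymptotics

noncomputable section

/-- The standard complex structure `J_st` (multiplication by `i`) on a complex
normed space, viewed as a real-linear endomorphism. -/
def Jst (E : Type*) [NormedAddCommGroup E] [NormedSpace ℂ E] : E →L[ℝ] E :=
  ContinuousLinearMap.restrictScalars ℝ (Complex.I • ContinuousLinearMap.id ℂ E)

variable {E F : Type*} [NormedAddCommGroup E] [NormedSpace ℂ E]
  [NormedAddCommGroup F] [NormedSpace ℂ F]

/-- `J` is an almost complex structure on the set `Ω`: a smooth field of real-linear
endomorphisms with `J x ∘ J x = -id`. -/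
structure IsACS (Ω : Set E) (J : E → E →L[ℝ] E) : Prop where
  smooth : ContDiffOn ℝ (⊤ : ℕ∞) J Ω
  sq : ∀ x ∈ Ω, (J x).comp (J x) = -(ContinuousLinearMap.id ℝ E)

/-- `f` is `(J', J)`-holomorphic on `s`: `Df(x) ∘ J'(x) = J(f x) ∘ Df(x)`. -/
def IsHolomorphicMapOn (J' : E → E →L[ℝ] E) (J : F → F →L[ℝ] F) (f : E → F)
    (s : Set E) : Prop :=
  ∀ x ∈ s, DifferentiableAt ℝ f x ∧
    (fderiv ℝ f x).comp (J' x) = (J (f x)).comp (fderiv ℝ f x)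

/-- The Levi form `L^J(r)(x)(X) = -d(J⋆dr)(x)(X, J x X)` where `J⋆dr` is the 1-form
`X ↦ dr(x)(J x X)` and `dω(x)(X,Y) = (Dω(x)X)(Y) - (Dω(x)Y)(X)`. -/
def leviForm (J : E → E →L[ℝ] E) (r : E → ℝ) (x : E) (X : E) : ℝ :=
  -((fderiv ℝ (fun y => (fderiv ℝ r y).comp (J y)) x X) (J x X)
    - (fderiv ℝ (fun y => (fderiv ℝ r y).comp (J y)) x (J x X)) X)

/-- `r` is strictly `J`-plurisubharmonic on `s`. -/
def StrictPSHOn (J : E → E →L[ℝ] E) (r : E → ℝ) (s : Set E) : Prop :=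
  ∀ x ∈ s, ∀ X : E, X ≠ 0 → 0 < leviForm J r x X

/-- `r` is `J`-plurisubharmonic on `s` (nonnegative Levi form). -/
def PSHOn (J : E → E →L[ℝ] E) (r : E → ℝ) (s : Set E) : Prop :=
  ∀ x ∈ s, ∀ X : E, 0 ≤ leviForm J r x X

/-- `C⁰` norm of `g` on `K`. -/
def c0Norm {G : Type*} [NormedAddCommGroup G] (g : E → G) (K : Set E) : ℝ :=
  ⨆ x : K, ‖g (x : E)‖

/-- `C¹` norm of `g` on `K`. -/
def c1Norm {G : Type*} [NormedAddCommGroup G] [NormedSpace ℝ G] (g : E → G) (K : Set E) : ℝ :=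
  ⨆ x : K, max ‖g (x : E)‖ ‖fderiv ℝ g (x : E)‖

/-- `C¹` distance between `g` and `h` on `K`. -/
def c1Dist {G : Type*} [NormedAddCommGroup G] [NormedSpace ℝ G] (g h : E → G) (K : Set E) : ℝ :=
  ⨆ x : K, max ‖g (x : E) - h (x : E)‖ ‖fderiv ℝ g (x : E) - fderiv ℝ h (x : E)‖

/-- `C²` distance between `g` and `h` on `K`. -/
def c2Dist {G : Type*} [NormedAddCommGroup G] [NormedSpace ℝ G] (g h : E → G) (K : Set E) : ℝ :=
  ⨆ x : K, max ‖g (x : E) - h (x : E)‖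
    (max ‖fderiv ℝ g (x : E) - fderiv ℝ h (x : E)‖
      ‖fderiv ℝ (fderiv ℝ g) (x : E) - fderiv ℝ (fderiv ℝ h) (x : E)‖)

/-- A `J`-holomorphic disc in `D`: a map from the unit disc `Δ ⊂ ℂ` to `D` satisfying
`Df(ζ) ∘ J_st = J(f ζ) ∘ Df(ζ)`. -/
def IsJDisc (J : F → F →L[ℝ] F) (D : Set F) (f : ℂ → F) : Prop :=
  MapsTo f (ball (0 : ℂ) 1) D ∧
  ∀ ζ ∈ ball (0 : ℂ) 1, DifferentiableAt ℝ f ζ ∧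
    (fderiv ℝ f ζ).comp (Jst ℂ) = (J (f ζ)).comp (fderiv ℝ f ζ)

/-- The Kobayashi–Royden infinitesimal pseudometric of `(D, J)`. -/
def kobayashiMetric (J : F → F →L[ℝ] F) (D : Set F) (p : F) (v : F) : ℝ :=
  sInf {α : ℝ | 0 < α ∧ ∃ f : ℂ → F, IsJDisc J D f ∧ f 0 = p ∧
    fderiv ℝ f 0 1 = α⁻¹ • v}

/-- The integrated Kobayashi pseudodistance of `(D, J)`. -/
def kobayashiDist (J : F → F →L[ℝ] F) (D : Set F) (p q : F) : ℝ :=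
  sInf {d : ℝ | ∃ γ : ℝ → F, ContDiffOn ℝ 1 γ (Icc 0 1) ∧ MapsTo γ (Icc 0 1) D ∧
    γ 0 = p ∧ γ 1 = q ∧ d = ∫ t in (0:ℝ)..1, kobayashiMetric J D (γ t) (deriv γ t)}

/-- `f` is a smooth diffeomorphism from `s` onto `t` with inverse `g`. -/
def IsDiffeoOn (f : E → F) (g : F → E) (s : Set E) (t : Set F) : Prop :=
  ContDiffOn ℝ (⊤ : ℕ∞) f s ∧ ContDiffOn ℝ (⊤ : ℕ∞) g t ∧ MapsTo f s t ∧ MapsTo g t s ∧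
  (∀ x ∈ s, g (f x) = x) ∧ (∀ y ∈ t, f (g y) = y)

/-- The Laplacian of a real function on `ℂ ≅ ℝ²`. -/
def lapR (g : ℂ → ℝ) (ζ : ℂ) : ℝ :=
  fderiv ℝ (fun w => fderiv ℝ g w 1) ζ 1
    + fderiv ℝ (fun w => fderiv ℝ g w Complex.I) ζ Complex.I

/-- The Wirtinger derivative `∂g/∂ζ`. -/
def wirtingerD (g : ℂ → ℂ) (ζ : ℂ) : ℂ :=
  (fderiv ℝ g ζ 1 - Complex.I * fderiv ℝ g ζ Complex.I) / 2

/-- The Wirtinger derivative `∂g/∂ζ̄`. -/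
def wirtingerDbar (g : ℂ → ℂ) (ζ : ℂ) : ℂ :=
  (fderiv ℝ g ζ 1 + Complex.I * fderiv ℝ g ζ Complex.I) / 2

/-- The coordinates of a point of `ℂ²`. -/
def coord2 (z : ℂ × ℂ) : Fin 2 → ℂ := ![z.1, z.2]

abbrev E2 := EuclideanSpace ℂ (Fin 2)

/-- A real endomorphism squaring to `-1` is conjugate to multiplication by `i` on any complex
space of the same finite real dimension. -/
theorem exists_linearEquiv_conj_I {V W : Type*} [AddCommGroup V] [Module ℝ V]
    [FiniteDimensional ℝ V] [AddCommGroup W] [Module ℂ W] [Module ℝ W] [IsScalarTower ℝ ℂ W]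
    [FiniteDimensional ℂ W] (j : Module.End ℝ V) (hj : j * j = -1)
    (hVW : Module.finrank ℝ V = Module.finrank ℝ W) :
    ∃ e : V ≃ₗ[ℝ] W, ∀ v, e (j v) = Complex.I • e v := by
  let φ : ℂ →ₐ[ℝ] Module.End ℝ V := Complex.lift ⟨j, hj⟩
  let _ : Module ℂ V := Module.compHom V φ.toRingHom
  have smul_eq : ∀ (c : ℂ) (v : V), c • v = φ c v := fun _ _ => rfl
  have : IsScalarTower ℝ ℂ V := ⟨fun r c v => by simp [smul_eq]⟩
  have : FiniteDimensional ℂ V := Module.Finite.right ℝ ℂ V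
  have h : Module.finrank ℂ V = Module.finrank ℂ W := by
    have hV := Module.finrank_mul_finrank ℝ ℂ V
    have hW := Module.finrank_mul_finrank ℝ ℂ W
    rw [Complex.finrank_real_complex] at hV hW
    omega
  let e := LinearEquiv.ofFinrankEq V W h
  refine ⟨e.restrictScalars ℝ, fun v => ?_⟩
  have hI : j v = Complex.I • v := by simp [smul_eq, φ]
  simp [hI]

theorem Filter.Eventually.forall_smul_closedBall {V : Type*} [NormedAddCommGroup V]
    [NormedSpace ℝ V] {P : V → Prop} (h : ∀ᶠ x in 𝓝 0, P x) :
    ∀ᶠ t : ℝ in 𝓝 0, ∀ y ∈ closedBall (0 : V) 1, P (t • y) := by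
  obtain ⟨r, hr, hP⟩ := Metric.eventually_nhds_iff_ball.1 h
  filter_upwards [ball_mem_nhds (0 : ℝ) hr] with t ht y hy
  refine hP _ ?_
  rw [mem_ball_zero_iff] at ht ⊢
  rw [mem_closedBall_zero_iff] at hy
  rw [norm_smul]
  exact (mul_le_of_le_one_right (norm_nonneg t) hy).trans_lt ht

set_option maxSynthPendingDepth 3 in
/-- Rescaling a `C²` map about the origin makes it `C²`-close to a constant. -/
theorem ContDiffAt.eventually_c2Dist_comp_smul_le {G : Type*} [NormedAddCommGroup G]
    [NormedSpace ℝ G] {g : E → G} (hg : ContDiffAt ℝ 2 g 0) {ε : ℝ} (hε : 0 < ε) :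
    ∀ᶠ t : ℝ in 𝓝 0,
      c2Dist (fun y => g (t • y)) (fun _ => g 0) (closedBall 0 1) ≤ ε := by
  have hg₁ : ContDiffAt ℝ 1 (fderiv ℝ g) 0 := hg.fderiv_right (by norm_num)
  have hg₂ : ContDiffAt ℝ 0 (fderiv ℝ (fderiv ℝ g)) 0 := hg₁.fderiv_right (by norm_num)
  have small : ∀ (C : ℝ) (k : ℕ), k ≠ 0 →
      ∀ᶠ t : ℝ in 𝓝 0, |t| ^ k * C < ε := by
    intro C k hk
    have : Tendsto (fun t : ℝ => |t| ^ k * C) (𝓝 0) (𝓝 (|0| ^ k * C)) :=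
      Continuous.tendsto (by fun_prop) 0
    exact this.eventually_lt_const (by simpa [hk] using hε)
  have hg₀ : ∀ᶠ x in 𝓝 (0 : E), ‖g x - g 0‖ < ε := by
    simpa [dist_eq_norm] using hg.continuousAt.eventually (ball_mem_nhds (g 0) hε)
  have bound₁ := (hg₁.continuousAt.norm.eventually_lt_const (lt_add_one _)).forall_smul_closedBall
  have bound₂ := (hg₂.continuousAt.norm.eventually_lt_const (lt_add_one _)).forall_smul_closedBall
  filter_upwards [hg₀.forall_smul_closedBall, bound₁, bound₂,
    small (‖fderiv ℝ g 0‖ + 1) 1 one_ne_zero,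
    small (‖fderiv ℝ (fderiv ℝ g) 0‖ + 1) 2 two_ne_zero] with t h₀ h₁ h₂ ht₁ ht₂
  have hd : fderiv ℝ (fun y => g (t • y)) = fun y => t • fderiv ℝ g (t • y) :=
    funext fun y => fderiv_comp_smul ..
  have hdd : ∀ y, fderiv ℝ (fun y => t • fderiv ℝ g (t • y)) y =
      t ^ 2 • fderiv ℝ (fderiv ℝ g) (t • y) := fun y => by
    refine (congrFun (fderiv_const_smul_field (f := fun y => fderiv ℝ g (t • y)) t) y).trans ?_
    rw [Pi.smul_apply, fderiv_comp_smul, smul_smul, sq]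
  refine Real.iSup_le (fun ⟨y, hy⟩ => ?_) hε.le
  simp only [fderiv_fun_const, fderiv_zero, hd, hdd, Pi.zero_apply, sub_zero, norm_smul,
    norm_pow, Real.norm_eq_abs]
  refine max_le (h₀ y hy).le (max_le ?_ ?_)
  · refine le_trans ?_ ht₁.le
    rw [pow_one]
    exact mul_le_mul_of_nonneg_left (h₁ y hy).le (abs_nonneg t)
  · refine le_trans ?_ ht₂.le
    exact mul_le_mul_of_nonneg_left (h₂ y hy).le (by positivity)

/-- Near any point an almost complex structure is, in suitable affine coordinates onto the unit
ball, an arbitrarily small `C²` deformation of the standard structure. -/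
theorem IsACS.exists_normalizing_diffeo [FiniteDimensional ℂ E] {Ω : Set E} (hΩ : IsOpen Ω)
    {J : E → E →L[ℝ] E} (hJ : IsACS Ω J) {p : E} (hp : p ∈ Ω) {ε : ℝ} (hε : 0 < ε) :
    ∃ (U₀ : Set E) (z w : E → E), IsOpen U₀ ∧ U₀ ⊆ Ω ∧ p ∈ U₀ ∧
      IsDiffeoOn z w U₀ (ball (0 : E) 1) ∧ z p = 0 ∧
      (fderiv ℝ z p).comp ((J p).comp (fderiv ℝ w 0)) = Jst E ∧
      ∃ Jhat : E → E →L[ℝ] E,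
        (∀ y ∈ ball (0 : E) 1,
          Jhat y = (fderiv ℝ z (w y)).comp ((J (w y)).comp (fderiv ℝ w y))) ∧
        ContDiffOn ℝ 2 Jhat (closedBall (0 : E) 1) ∧
        c2Dist Jhat (fun _ => Jst E) (closedBall (0 : E) 1) ≤ ε := by
  have : FiniteDimensional ℝ E := Module.Finite.trans ℂ E
  obtain ⟨e, he⟩ := exists_linearEquiv_conj_I (V := E) (W := E) (J p : E →ₗ[ℝ] E)
    (LinearMap.ext fun v => by simpa using congrArg (fun L => L v) (hJ.sq p hp)) rfl
  let A : E ≃L[ℝ] E := e.toContinuousLinearEquiv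
  have hA : ∀ v, A (J p v) = Complex.I • A v := he
  let g : E → E →L[ℝ] E := fun y =>
    (A : E →L[ℝ] E).comp ((J (p + A.symm y)).comp (A.symm : E →L[ℝ] E))
  let S : Set E := (fun y => p + A.symm y) ⁻¹' Ω
  have hS : IsOpen S := hΩ.preimage (by fun_prop)
  have h0S : (0 : E) ∈ S := by simpa [S] using hp
  have hg : ContDiffOn ℝ 2 g S := by
    have h : ContDiffOn ℝ 2 (fun y => J (p + A.symm y)) S :=
      (hJ.smooth.of_le (WithTop.coe_le_coe.2 le_top)).comp
        (contDiff_const.add A.symm.contDiff).contDiffOn fun _ hy => hy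
    exact contDiffOn_const.clm_comp (h.clm_comp contDiffOn_const)
  have hg0 : g 0 = Jst E := by
    ext v : 1
    simp [g, hA, Jst]
  obtain ⟨t, ⟨ht, hmaps⟩, htpos⟩ :=
    ((((hg.contDiffAt (hS.mem_nhds h0S)).eventually_c2Dist_comp_smul_le hε).and
      (Filter.Eventually.forall_smul_closedBall (hS.mem_nhds h0S))).filter_mono
        nhdsWithin_le_nhds |>.and self_mem_nhdsWithin : ∀ᶠ t : ℝ in 𝓝[>] 0, _).exists
  have htpos : 0 < t := htpos
  let z : E → E := fun x => t⁻¹ • A (x - p)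
  let w : E → E := fun y => p + A.symm (t • y)
  have hz : ContDiff ℝ (⊤ : ℕ∞) z := by fun_prop
  have hw : ContDiff ℝ (⊤ : ℕ∞) w := by fun_prop
  have hwz : ∀ x, w (z x) = x := fun x => by simp [w, z, htpos.ne']
  have hzw : ∀ y, z (w y) = y := fun y => by simp [w, z, htpos.ne']
  have hzp : z p = 0 := by simp [z]
  have hw0 : w 0 = p := by simp [w]
  have hdz : ∀ x, fderiv ℝ z x = t⁻¹ • (A : E →L[ℝ] E) := fun x =>
    ((A.hasFDerivAt.comp x ((hasFDerivAt_id x).sub_const p)).const_smul t⁻¹).fderiv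
  have hdw : ∀ y, fderiv ℝ w y = t • (A.symm : E →L[ℝ] E) := fun y => by
    have h := (A.symm.hasFDerivAt.comp y ((hasFDerivAt_id y).const_smul t)).const_add p
    refine h.fderiv.trans ?_
    ext v
    simp
  have hpush : ∀ y, g (t • y) = (fderiv ℝ z (w y)).comp ((J (w y)).comp (fderiv ℝ w y)) :=
    fun y => by
      ext v : 1
      rw [hdz, hdw]
      simp [g, w, htpos.ne']
  refine ⟨z ⁻¹' ball 0 1, z, w, isOpen_ball.preimage hz.continuous, fun x hx => ?_, ?_,
    ⟨hz.contDiffOn, hw.contDiffOn, fun _ h => h, fun y hy => ?_, fun x _ => hwz x,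
      fun y _ => hzw y⟩, hzp, ?_, fun y => g (t • y), fun y _ => hpush y, ?_, ?_⟩
  · rw [← hwz x]
    exact hmaps _ (ball_subset_closedBall hx)
  · simp [hzp]
  · rwa [mem_preimage, hzw]
  · have h := hpush 0
    rwa [smul_zero, hg0, hw0, eq_comm] at h
  · exact hg.comp (contDiff_const_smul t).contDiffOn hmaps
  · rwa [hg0] at ht

/-- **Normalization lemma.** Every almost complex structure can be represented locally
as a small `C²` deformation of the standard structure: for every `λ₀ > 0` there is a
coordinate diffeomorphism `z : U₀ → 𝔹₂` with `z(p) = 0`,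
`Dz(p) ∘ J(p) ∘ (Dz(p))⁻¹ = J_st` and `‖z_*(J) − J_st‖_{C²(𝔹̄₂)} ≤ λ₀`. -/
theorem statement3
    (Ω : Set E2) (hΩ : IsOpen Ω) (J : E2 → E2 →L[ℝ] E2) (hJ : IsACS Ω J)
    (p : E2) (hp : p ∈ Ω) (lam0 : ℝ) (hlam0 : 0 < lam0) :
    ∃ (U₀ : Set E2) (z w : E2 → E2), IsOpen U₀ ∧ U₀ ⊆ Ω ∧ p ∈ U₀ ∧
      IsDiffeoOn z w U₀ (ball (0 : E2) 1) ∧ z p = 0 ∧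
      (fderiv ℝ z p).comp ((J p).comp (fderiv ℝ w 0)) = Jst E2 ∧
      ∃ Jhat : E2 → E2 →L[ℝ] E2,
        (∀ y ∈ ball (0 : E2) 1,
          Jhat y = (fderiv ℝ z (w y)).comp ((J (w y)).comp (fderiv ℝ w y))) ∧
        ContDiffOn ℝ 2 Jhat (closedBall (0 : E2) 1) ∧
        c2Dist Jhat (fun _ => Jst E2) (closedBall (0 : E2) 1) ≤ lam0 := by
  exact hJ.exists_normalizing_diffeo hΩ hp hlam0

end
end

section
/- Let Ω be an open set in ℝ^{2n} with an almost complex structure J and let u be a C² real-valued function on Ω. Then L^J(u)(x)(X) ≥ 0 for every x ∈ Ω and every X ∈ ℝ^{2n} if and only if for every C² J-holomorphic disc f : Δ → Ω the composition u ∘ f is subharmonic on Δ, i.e. the Laplacian of u ∘ f is nonnegative on Δ. -/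
open Metric Set Filter Topology Asymptotics

noncomputable section

variable {E F : Type*} [NormedAddCommGroup E] [NormedSpace ℂ E]
  [NormedAddCommGroup F] [NormedSpace ℂ F]

section CauchyTransform

open MeasureTheory

variable {V W : Type*} [NormedAddCommGroup V] [NormedSpace ℝ V]
  [NormedAddCommGroup W] [NormedSpace ℝ W]

/-- The action of a complex number on `V` through the complex structure `J₀`. -/
def complexAct (J₀ : V →L[ℝ] V) (c : ℂ) : V →L[ℝ] V :=
  c.re • ContinuousLinearMap.id ℝ V + c.im • J₀

lemma complexAct_apply (J₀ : V →L[ℝ] V) (c : ℂ) (v : V) :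
    complexAct J₀ c v = c.re • v + c.im • J₀ v := by
  simp [complexAct]

lemma norm_complexAct_apply_le (J₀ : V →L[ℝ] V) (c : ℂ) (v : V) :
    ‖complexAct J₀ c v‖ ≤ (1 + ‖J₀‖) * ‖c‖ * ‖v‖ := by
  rw [complexAct_apply]
  calc ‖c.re • v + c.im • J₀ v‖ ≤ |c.re| * ‖v‖ + |c.im| * (‖J₀‖ * ‖v‖) := by
        refine (norm_add_le _ _).trans ?_
        rw [norm_smul, norm_smul, Real.norm_eq_abs, Real.norm_eq_abs]
        gcongr
        exact J₀.le_opNorm v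
    _ ≤ ‖c‖ * ‖v‖ + ‖c‖ * (‖J₀‖ * ‖v‖) := by
        gcongr
        · exact Complex.abs_re_le_norm c
        · exact Complex.abs_im_le_norm c
    _ = (1 + ‖J₀‖) * ‖c‖ * ‖v‖ := by ring

/-- The Cauchy transform `g ↦ g * (1 / (π w))` with respect to the complex structure `J₀`. -/
def cauchyTransform (J₀ : V →L[ℝ] V) (g : ℂ → V) (z : ℂ) : V :=
  ∫ w, complexAct J₀ ((Real.pi : ℂ)⁻¹ * w⁻¹) (g (z - w))

lemma locallyIntegrable_norm_inv : LocallyIntegrable (fun w : ℂ => ‖w‖⁻¹) := by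
  refine locallyIntegrable_of_norm_le_rpow (C := 1) (α := 1) ?_ ?_ ?_ ?_
  · simp [Complex.finrank_real_complex]
  · simp [Complex.finrank_real_complex]
  · refine Eventually.of_forall fun w => ?_
    simp [Real.rpow_neg_one]
  · exact (measurable_norm.inv).aestronglyMeasurable

lemma measurable_cauchyKernel_apply (J₀ : V →L[ℝ] V) {g : ℂ → V} (hg : Continuous g) (z : ℂ) :
    AEStronglyMeasurable (fun w => complexAct J₀ ((Real.pi : ℂ)⁻¹ * w⁻¹) (g (z - w))) := by
  simp only [complexAct_apply]
  have h1 : Measurable fun w : ℂ => (Real.pi : ℂ)⁻¹ * w⁻¹ := measurable_id.inv.const_mul _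
  have h2 : Continuous fun w => g (z - w) := by fun_prop
  have h3 : Continuous fun w => J₀ (g (z - w)) := by fun_prop
  exact ((Complex.measurable_re.comp h1).aestronglyMeasurable.smul h2.aestronglyMeasurable).add
    ((Complex.measurable_im.comp h1).aestronglyMeasurable.smul h3.aestronglyMeasurable)

lemma norm_cauchyKernel_apply_le (J₀ : V →L[ℝ] V) (w : ℂ) (v : V) :
    ‖complexAct J₀ ((Real.pi : ℂ)⁻¹ * w⁻¹) v‖ ≤ (1 + ‖J₀‖) * Real.pi⁻¹ * (‖v‖ * ‖w‖⁻¹) := by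
  refine (norm_complexAct_apply_le J₀ _ v).trans (le_of_eq ?_)
  rw [norm_mul, norm_inv, norm_inv, Complex.norm_real, Real.norm_of_nonneg Real.pi_pos.le]
  ring

lemma integrable_cauchyKernel_apply (J₀ : V →L[ℝ] V) {g : ℂ → V} (hg : Continuous g)
    (hs : HasCompactSupport g) (z : ℂ) :
    Integrable (fun w => complexAct J₀ ((Real.pi : ℂ)⁻¹ * w⁻¹) (g (z - w))) := by
  have hs' : HasCompactSupport fun w => ‖g (z - w)‖ :=
    (hs.comp_homeomorph (Homeomorph.subLeft z)).norm
  have hc : Continuous fun w => ‖g (z - w)‖ := by fun_prop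
  have h1 := (locallyIntegrable_norm_inv.integrable_smul_left_of_hasCompactSupport hc hs').const_mul
    ((1 + ‖J₀‖) * Real.pi⁻¹)
  refine h1.mono' (measurable_cauchyKernel_apply J₀ hg z) (Eventually.of_forall fun w => ?_)
  exact norm_cauchyKernel_apply_le J₀ w _

lemma exists_norm_cauchyTransform_le (J₀ : V →L[ℝ] V) :
    ∃ C > 0, ∀ g : ℂ → V, Continuous g → ∀ (c : ℂ) (M : ℝ), (∀ w, ‖g w‖ ≤ M) →
      (∀ w, 3 < ‖w - c‖ → g w = 0) → ∀ z, ‖cauchyTransform J₀ g z‖ ≤ C * M := by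
  have hint0 : Integrable ((ball (0 : ℂ) 1).indicator fun w => ‖w‖⁻¹) := by
    rw [integrable_indicator_iff measurableSet_ball]
    exact (locallyIntegrable_norm_inv.integrableOn_isCompact
      (isCompact_closedBall (0 : ℂ) 1)).mono_set ball_subset_closedBall
  set A := ∫ w, (ball (0 : ℂ) 1).indicator (fun w => ‖w‖⁻¹) w with hA
  set B := volume.real (closedBall (0 : ℂ) 3) with hB
  have hA0 : 0 ≤ A := integral_nonneg fun w => indicator_nonneg (fun _ _ => by positivity) w
  have hB0 : 0 ≤ B := measureReal_nonneg
  refine ⟨(1 + ‖J₀‖) * Real.pi⁻¹ * (A + B) + 1, by positivity, ?_⟩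
  intro g hg c M hM hsupp z
  have hM0 : 0 ≤ M := (norm_nonneg _).trans (hM 0)
  have hint1 : Integrable ((closedBall (z - c) 3).indicator fun _ => (1 : ℝ)) := by
    rw [integrable_indicator_iff measurableSet_closedBall]
    exact (locallyIntegrable_const (1 : ℝ)).integrableOn_isCompact (isCompact_closedBall (z - c) 3)
  have hI1 : ∫ w, (closedBall (z - c) 3).indicator (fun _ => (1 : ℝ)) w = B := by
    rw [integral_indicator_const _ measurableSet_closedBall, hB, smul_eq_mul, mul_one,
      measureReal_def, measureReal_def, Measure.addHaar_closedBall_center]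
  have hbound : ∀ w, ‖complexAct J₀ ((Real.pi : ℂ)⁻¹ * w⁻¹) (g (z - w))‖ ≤
      (1 + ‖J₀‖) * Real.pi⁻¹ * M * ((ball (0 : ℂ) 1).indicator (fun w => ‖w‖⁻¹) w +
        (closedBall (z - c) 3).indicator (fun _ => (1 : ℝ)) w) := by
    intro w
    have hnn1 : 0 ≤ (ball (0 : ℂ) 1).indicator (fun w : ℂ => ‖w‖⁻¹) w :=
      indicator_nonneg (fun _ _ => by positivity) w
    have hnn2 : 0 ≤ (closedBall (z - c) 3).indicator (fun _ : ℂ => (1 : ℝ)) w :=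
      indicator_nonneg (fun _ _ => by positivity) w
    refine (norm_cauchyKernel_apply_le J₀ w _).trans ?_
    rw [mul_assoc _ M]
    refine mul_le_mul_of_nonneg_left ?_ (by positivity)
    by_cases hw : 3 < ‖z - w - c‖
    · rw [hsupp _ hw]
      simp only [norm_zero, zero_mul]
      positivity
    · have hmem : w ∈ closedBall (z - c) 3 := by
        rw [mem_closedBall, dist_comm, dist_eq_norm]
        rw [show z - c - w = z - w - c by ring]
        exact not_lt.mp hw
      gcongr
      · exact hM _
      · by_cases hw1 : w ∈ ball (0 : ℂ) 1
        · rw [indicator_of_mem hw1]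
          linarith
        · rw [indicator_of_notMem hw1, indicator_of_mem hmem, zero_add]
          apply inv_le_one_of_one_le₀
          simpa using hw1
  have := norm_integral_le_of_norm_le ((hint0.add hint1).const_mul
    ((1 + ‖J₀‖) * Real.pi⁻¹ * M)) (Eventually.of_forall hbound)
  rw [integral_const_mul] at this
  simp only [Pi.add_apply] at this
  rw [integral_add hint0 hint1, hI1, ← hA] at this
  unfold cauchyTransform
  refine this.trans ?_
  nlinarith

lemma cauchyTransform_sub (J₀ : V →L[ℝ] V) {g h : ℂ → V} (hg : Continuous g)
    (hgs : HasCompactSupport g) (hh : Continuous h) (hhs : HasCompactSupport h) (z : ℂ) :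
    cauchyTransform J₀ (fun w => g w - h w) z =
      cauchyTransform J₀ g z - cauchyTransform J₀ h z := by
  unfold cauchyTransform
  rw [← integral_sub (integrable_cauchyKernel_apply J₀ hg hgs z)
    (integrable_cauchyKernel_apply J₀ hh hhs z)]
  simp only [map_sub]

lemma cauchyTransform_add (J₀ : V →L[ℝ] V) {g h : ℂ → V} (hg : Continuous g)
    (hgs : HasCompactSupport g) (hh : Continuous h) (hhs : HasCompactSupport h) (z : ℂ) :
    cauchyTransform J₀ (fun w => g w + h w) z =
      cauchyTransform J₀ g z + cauchyTransform J₀ h z := by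
  unfold cauchyTransform
  rw [← integral_add (integrable_cauchyKernel_apply J₀ hg hgs z)
    (integrable_cauchyKernel_apply J₀ hh hhs z)]
  simp only [map_add]

lemma cauchyTransform_translate (J₀ : V →L[ℝ] V) (g : ℂ → V) (h z : ℂ) :
    cauchyTransform J₀ (fun w => g (w + h)) z = cauchyTransform J₀ g (z + h) := by
  unfold cauchyTransform
  congr 1
  ext w
  rw [show z + h - w = z - w + h by ring]

lemma map_cauchyTransform [CompleteSpace V] [CompleteSpace W] (J₀ : V →L[ℝ] V) (J₁ : W →L[ℝ] W)
    (L : V →L[ℝ] W) (hL : ∀ v, L (J₀ v) = J₁ (L v)) {g : ℂ → V} (hg : Continuous g)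
    (hs : HasCompactSupport g) (z : ℂ) :
    L (cauchyTransform J₀ g z) = cauchyTransform J₁ (fun w => L (g w)) z := by
  unfold cauchyTransform
  rw [← L.integral_comp_comm (integrable_cauchyKernel_apply J₀ hg hs z)]
  simp only [complexAct_apply, map_add, map_smul, hL]

lemma hasCompactSupport_of_norm_gt {β : Type*} [Zero β] {g : ℂ → β} {c : ℂ} {r : ℝ}
    (h : ∀ w, r < ‖w - c‖ → g w = 0) : HasCompactSupport g := by
  refine HasCompactSupport.intro (isCompact_closedBall c r) fun w hw => h w ?_
  simpa [dist_eq_norm] using hw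

lemma continuous_cauchyTransform (J₀ : V →L[ℝ] V) {g : ℂ → V} (hg : Continuous g)
    (hs : ∀ w, 2 < ‖w‖ → g w = 0) : Continuous (cauchyTransform J₀ g) := by
  obtain ⟨C, hC, hT⟩ := exists_norm_cauchyTransform_le J₀
  have hcs : HasCompactSupport g :=
    hasCompactSupport_of_norm_gt (c := 0) (r := 2) (by simpa using hs)
  have hu := hcs.uniformContinuous_of_continuous hg
  rw [Metric.continuous_iff]
  intro z ε hε
  obtain ⟨δ, hδ, h⟩ := Metric.uniformContinuous_iff.mp hu (ε / (2 * C)) (by positivity)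
  refine ⟨min δ 1, by positivity, fun a ha => ?_⟩
  have ha1 : ‖a - z‖ < δ := by
    rw [← dist_eq_norm]; exact ha.trans_le (min_le_left _ _)
  have ha2 : ‖a - z‖ < 1 := by
    rw [← dist_eq_norm]; exact ha.trans_le (min_le_right _ _)
  have hgc : Continuous fun w => g (w + (a - z)) := by fun_prop
  have hgs : HasCompactSupport fun w => g (w + (a - z)) :=
    hcs.comp_homeomorph (Homeomorph.addRight (a - z))
  have key : cauchyTransform J₀ g a - cauchyTransform J₀ g z =
      cauchyTransform J₀ (fun w => g (w + (a - z)) - g w) z := by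
    rw [cauchyTransform_sub J₀ hgc hgs hg hcs, cauchyTransform_translate]
    congr 2
    ring
  rw [dist_eq_norm, key]
  refine (hT _ (by fun_prop) 0 (ε / (2 * C)) (fun w => ?_) (fun w hw => ?_) z).trans_lt ?_
  · rw [← dist_eq_norm]
    refine (h ?_).le
    rw [dist_eq_norm]
    simpa using ha1
  · rw [sub_zero] at hw
    rw [hs w (by linarith), hs (w + (a - z)), sub_zero]
    have := norm_sub_norm_le w (-(a - z))
    rw [norm_neg, sub_neg_eq_add] at this
    linarith
  · rw [show C * (ε / (2 * C)) = ε / 2 by field_simp]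
    linarith

end CauchyTransform

section CauchyPompeiu

open MeasureTheory

variable {V : Type*} [NormedAddCommGroup V] [NormedSpace ℝ V]

/-- The `∂/∂ζ̄` operator with respect to the complex structure `J₀`. -/
def dbarOp (J₀ : V →L[ℝ] V) (g : ℂ → V) (z : ℂ) : V :=
  (1 / 2 : ℝ) • (fderiv ℝ g z 1 + J₀ (fderiv ℝ g z Complex.I))

/-- The `∂/∂ζ` operator with respect to the complex structure `J₀`. -/
def delOp (J₀ : V →L[ℝ] V) (g : ℂ → V) (z : ℂ) : V :=
  (1 / 2 : ℝ) • (fderiv ℝ g z 1 - J₀ (fderiv ℝ g z Complex.I))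

/-- The point `e^{iθ}` of the unit circle. -/
def circlePoint (θ : ℝ) : ℂ := Real.cos θ + Real.sin θ * Complex.I

lemma continuous_circlePoint : Continuous circlePoint := by
  unfold circlePoint; fun_prop

lemma norm_circlePoint (θ : ℝ) : ‖circlePoint θ‖ = 1 := by
  simp [circlePoint, Complex.norm_cos_add_sin_mul_I]

lemma circlePoint_re (θ : ℝ) : (circlePoint θ).re = Real.cos θ := by
  simp only [circlePoint, Complex.add_re, Complex.ofReal_re, Complex.mul_re, Complex.I_re,
    Complex.I_im, Complex.ofReal_im]
  ring

lemma circlePoint_im (θ : ℝ) : (circlePoint θ).im = Real.sin θ := by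
  simp only [circlePoint, Complex.add_im, Complex.ofReal_re, Complex.mul_im, Complex.I_re,
    Complex.I_im, Complex.ofReal_im]
  ring

lemma hasDerivAt_circlePoint (θ : ℝ) :
    HasDerivAt circlePoint (Complex.I * circlePoint θ) θ := by
  have h := ((Real.hasDerivAt_cos θ).ofReal_comp).add
    (((Real.hasDerivAt_sin θ).ofReal_comp).mul_const Complex.I)
  refine h.congr_deriv ?_
  simp only [circlePoint, Complex.ofReal_neg]
  linear_combination (-(Real.sin θ : ℂ)) * Complex.I_mul_I

lemma fderiv_apply_eq_re_im (L : ℂ →L[ℝ] V) (c : ℂ) :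
    L c = c.re • L 1 + c.im • L Complex.I := by
  rw [← map_smul, ← map_smul, ← map_add]
  congr 1
  apply Complex.ext <;> simp

lemma complexAct_polar (J₀ : V →L[ℝ] V) (hJ₀ : ∀ v, J₀ (J₀ v) = -v) (L : ℂ →L[ℝ] V)
    {r : ℝ} (hr : 0 < r) (θ : ℝ) :
    r • complexAct J₀ ((Real.pi : ℂ)⁻¹ * ((r : ℂ) * circlePoint θ)⁻¹)
      ((1 / 2 : ℝ) • (L 1 + J₀ (L Complex.I))) =
    (2 * Real.pi)⁻¹ • (L (circlePoint θ) + J₀ (L (Complex.I * circlePoint θ))) := by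
  have hre : ((circlePoint θ)⁻¹).re = Real.cos θ := by
    rw [Complex.inv_re, Complex.normSq_eq_norm_sq, norm_circlePoint, circlePoint_re]; simp
  have him : ((circlePoint θ)⁻¹).im = -Real.sin θ := by
    rw [Complex.inv_im, Complex.normSq_eq_norm_sq, norm_circlePoint, circlePoint_im]; simp
  have hk : (Real.pi : ℂ)⁻¹ * ((r : ℂ) * circlePoint θ)⁻¹ =
      ((Real.pi⁻¹ * r⁻¹ : ℝ) : ℂ) * (circlePoint θ)⁻¹ := by
    push_cast
    rw [mul_inv, mul_assoc]
  rw [hk, complexAct_apply, Complex.re_ofReal_mul, Complex.im_ofReal_mul, hre, him,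
    fderiv_apply_eq_re_im L (circlePoint θ), fderiv_apply_eq_re_im L (Complex.I * circlePoint θ)]
  simp only [Complex.mul_re, Complex.mul_im, Complex.I_re, Complex.I_im, circlePoint_re,
    circlePoint_im, map_add, map_smul, hJ₀]
  have hpi := Real.pi_ne_zero
  match_scalars <;> field_simp <;> ring

lemma cauchyTransform_dbarOp [CompleteSpace V] (J₀ : V →L[ℝ] V) (hJ₀ : ∀ v, J₀ (J₀ v) = -v)
    {g : ℂ → V} (hg : ContDiff ℝ 1 g) (hs : HasCompactSupport g) (z : ℂ) :
    cauchyTransform J₀ (dbarOp J₀ g) z = g z := by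
  have hdg : Continuous (fderiv ℝ g) := hg.continuous_fderiv one_ne_zero
  obtain ⟨R, hR0, hR⟩ : ∃ R : ℝ, 0 < R ∧ ∀ w : ℂ, R < ‖w‖ → g (z - w) = 0 := by
    have hs' : HasCompactSupport fun w => g (z - w) := hs.comp_homeomorph (Homeomorph.subLeft z)
    obtain ⟨R, hR0, hR⟩ := hs'.isCompact.isBounded.exists_pos_norm_le
    refine ⟨R, hR0, fun w hw => ?_⟩
    by_contra hne
    have := hR w (subset_tsupport _ hne)
    linarith
  have hgd : ∀ w, HasFDerivAt g (fderiv ℝ g w) w :=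
    fun w => (hg.differentiable one_ne_zero w).hasFDerivAt
  have hdR : ∀ w : ℂ, R < ‖w‖ → fderiv ℝ g (z - w) = 0 := by
    intro w hw
    have hev : g =ᶠ[𝓝 (z - w)] fun _ => 0 := by
      have hopen : IsOpen {v : ℂ | R < ‖z - v‖} :=
        isOpen_lt continuous_const (by fun_prop)
      filter_upwards [hopen.mem_nhds (show R < ‖z - (z - w)‖ by simpa using hw)] with v hv
      simpa using hR (z - v) hv
    rw [hev.fderiv_eq]
    simp
  set A : ℝ × ℝ → V := fun p => fderiv ℝ g (z - p.1 * circlePoint p.2) (circlePoint p.2) with hA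
  set B : ℝ × ℝ → V := fun p =>
    fderiv ℝ g (z - p.1 * circlePoint p.2) (Complex.I * circlePoint p.2) with hB
  have hcp := continuous_circlePoint
  have hAc : Continuous A := by
    have : Continuous fun p : ℝ × ℝ => fderiv ℝ g (z - p.1 * circlePoint p.2) :=
      hdg.comp (by fun_prop)
    exact this.clm_apply (by fun_prop)
  have hBc : Continuous B := by
    have : Continuous fun p : ℝ × ℝ => fderiv ℝ g (z - p.1 * circlePoint p.2) :=
      hdg.comp (by fun_prop)
    exact this.clm_apply (by fun_prop)
  have hnorm : ∀ p : ℝ × ℝ, 0 < p.1 → ‖(p.1 : ℂ) * circlePoint p.2‖ = p.1 := by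
    intro p hp
    rw [norm_mul, norm_circlePoint, mul_one, Complex.norm_real, Real.norm_of_nonneg hp.le]
  have hint : ∀ F : ℝ × ℝ → V, Continuous F → (∀ p : ℝ × ℝ, 0 < p.1 → R < p.1 → F p = 0) →
      IntegrableOn F (Ioi (0 : ℝ) ×ˢ Ioo (-Real.pi) Real.pi) := by
    intro F hF hF0
    have h1 : IntegrableOn F (Icc (0 : ℝ) R ×ˢ Icc (-Real.pi) Real.pi) :=
      hF.continuousOn.integrableOn_compact (isCompact_Icc.prod isCompact_Icc)
    refine IntegrableOn.of_forall_sdiff_eq_zero h1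
      (measurableSet_Ioi.prod measurableSet_Ioo) ?_
    rintro p ⟨⟨hp1, hp2⟩, hp3⟩
    refine hF0 p hp1 ?_
    by_contra hle
    exact hp3 ⟨⟨le_of_lt hp1, not_lt.mp hle⟩, ⟨hp2.1.le, hp2.2.le⟩⟩
  have hAi := hint A hAc (fun p hp hpR => by
    simp only [hA]
    rw [hdR _ (by rwa [hnorm p hp])]; simp)
  have hBi := hint B hBc (fun p hp hpR => by
    simp only [hB]
    rw [hdR _ (by rwa [hnorm p hp])]; simp)
  have hIA : ∫ p in Ioi (0 : ℝ) ×ˢ Ioo (-Real.pi) Real.pi, A p = (2 * Real.pi) • g z := by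
    rw [Measure.volume_eq_prod, ← Measure.prod_restrict, integral_prod_symm]
    · have hinner : ∀ θ : ℝ, ∫ r in Ioi (0 : ℝ), A (r, θ) = g z := by
        intro θ
        have hd : ∀ r ∈ Ici (0 : ℝ), HasDerivAt (fun r : ℝ => -g (z - r * circlePoint θ))
            (A (r, θ)) r := by
          intro r _
          have h1 : HasDerivAt (fun r : ℝ => z - r * circlePoint θ) (-(1 * circlePoint θ)) r := by
            have := ((hasDerivAt_id r).ofReal_comp.mul_const (circlePoint θ)).const_sub z
            simpa using this
          have h2 := ((hgd (z - r * circlePoint θ)).comp_hasDerivAt r h1).neg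
          refine h2.congr_deriv ?_
          simp [hA]
        have hi : IntegrableOn (fun r => A (r, θ)) (Ioi 0) := by
          have h1 : IntegrableOn (fun r => A (r, θ)) (Icc 0 R) :=
            (by fun_prop : Continuous fun r => A (r, θ)).continuousOn.integrableOn_compact
              isCompact_Icc
          refine IntegrableOn.of_forall_sdiff_eq_zero h1 measurableSet_Ioi ?_
          rintro r ⟨hr, hr'⟩
          have hrR : R < r := by
            by_contra hle
            exact hr' ⟨le_of_lt hr, not_lt.mp hle⟩
          simp only [hA]
          rw [hdR _ (by rwa [hnorm (r, θ) hr])]; simp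
        have hlim : Tendsto (fun r : ℝ => -g (z - r * circlePoint θ)) atTop (𝓝 0) := by
          refine tendsto_const_nhds.congr' ?_
          filter_upwards [eventually_gt_atTop R] with r hr
          rw [hR _ (by rwa [hnorm (r, θ) (hR0.trans hr)]), neg_zero]
        rw [integral_Ioi_of_hasDerivAt_of_tendsto' hd hi hlim]
        simp
      simp_rw [hinner]
      rw [setIntegral_const, measureReal_def, Real.volume_Ioo, ENNReal.toReal_ofReal]
      · congr 1; ring
      · have := Real.pi_pos; linarith
    · rw [Measure.prod_restrict, ← Measure.volume_eq_prod]
      exact hAi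
  have hIB : ∫ p in Ioi (0 : ℝ) ×ˢ Ioo (-Real.pi) Real.pi, B p = 0 := by
    rw [Measure.volume_eq_prod, setIntegral_prod]
    · have hinner : ∀ r ∈ Ioi (0 : ℝ), ∫ θ in Ioo (-Real.pi) Real.pi, B (r, θ) = 0 := by
        intro r hr
        have hr : 0 < r := hr
        rw [← integral_Ioc_eq_integral_Ioo,
          ← intervalIntegral.integral_of_le (by have := Real.pi_pos; linarith)]
        have hd : ∀ θ ∈ uIcc (-Real.pi) Real.pi,
            HasDerivAt (fun θ : ℝ => -(r⁻¹ • g (z - r * circlePoint θ))) (B (r, θ)) θ := by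
          intro θ _
          have h1 : HasDerivAt (fun θ : ℝ => z - r * circlePoint θ)
              (-(r * (Complex.I * circlePoint θ))) θ :=
            ((hasDerivAt_circlePoint θ).const_mul (r : ℂ)).const_sub z
          have h2 := (((hgd (z - r * circlePoint θ)).comp_hasDerivAt θ h1).const_smul r⁻¹).neg
          refine h2.congr_deriv ?_
          rw [map_neg, smul_neg, neg_neg,
            ← Complex.real_smul (x := r) (z := Complex.I * circlePoint θ), map_smul, smul_smul,
            inv_mul_cancel₀ hr.ne', one_smul]
        rw [intervalIntegral.integral_eq_sub_of_hasDerivAt hd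
          ((by fun_prop : Continuous fun θ => B (r, θ)).intervalIntegrable _ _)]
        simp [circlePoint]
      rw [setIntegral_congr_fun measurableSet_Ioi hinner]
      simp
    · rw [← Measure.volume_eq_prod]
      exact hBi
  unfold cauchyTransform
  rw [← Complex.integral_comp_polarCoord_symm, polarCoord_target]
  have hcongr : ∀ p ∈ Ioi (0 : ℝ) ×ˢ Ioo (-Real.pi) Real.pi,
      p.1 • complexAct J₀ ((Real.pi : ℂ)⁻¹ * (Complex.polarCoord.symm p)⁻¹)
        (dbarOp J₀ g (z - Complex.polarCoord.symm p)) = (2 * Real.pi)⁻¹ • (A p + J₀ (B p)) := by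
    intro p hp
    rw [Complex.polarCoord_symm_apply]
    exact complexAct_polar J₀ hJ₀ _ hp.1 p.2
  rw [setIntegral_congr_fun (measurableSet_Ioi.prod measurableSet_Ioo) hcongr, integral_smul,
    integral_add hAi (J₀.integrable_comp hBi), J₀.integral_comp_comm hBi, hIA, hIB, map_zero,
    add_zero, smul_smul, inv_mul_cancel₀ (by have := Real.pi_ne_zero; positivity), one_smul]

end CauchyPompeiu

section FixedPoint

open MeasureTheory BoundedContinuousFunction

variable {V : Type*} [NormedAddCommGroup V] [NormedSpace ℝ V]

/-- `C` bounds the sup norm of the Cauchy transform on functions supported in discs of radius 3. -/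
def IsCauchyBound (J₀ : V →L[ℝ] V) (C : ℝ) : Prop :=
  ∀ g : ℂ → V, Continuous g → ∀ (c : ℂ) (M : ℝ), (∀ w, ‖g w‖ ≤ M) →
    (∀ w, 3 < ‖w - c‖ → g w = 0) → ∀ z, ‖cauchyTransform J₀ g z‖ ≤ C * M

lemma norm_le_of_norm_le_add_half {α β : Type*} [NormedAddCommGroup β] {d : α → β} {A : ℝ}
    (hb : ∃ B, ∀ z, ‖d z‖ ≤ B) (h : ∀ B, (∀ z, ‖d z‖ ≤ B) → ∀ z, ‖d z‖ ≤ A + B / 2) (z : α) :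
    ‖d z‖ ≤ 2 * A := by
  obtain ⟨B, hB⟩ := hb
  have hbdd : BddAbove (range fun z => ‖d z‖) := ⟨B, by rintro _ ⟨z, rfl⟩; exact hB z⟩
  have h1 : ∀ z, ‖d z‖ ≤ ⨆ z, ‖d z‖ := le_ciSup hbdd
  have : Nonempty α := ⟨z⟩
  have h2 : (⨆ z, ‖d z‖) ≤ A + (⨆ z, ‖d z‖) / 2 := ciSup_le (h _ h1)
  linarith [h1 z]

lemma exists_fixedPoint_cauchyTransform [CompleteSpace V] {J₀ : V →L[ℝ] V} {C δ : ℝ}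
    (hC : IsCauchyBound J₀ C) {Φ : ℂ × V → V} (hΦ : Continuous Φ)
    (hsupp : ∀ q : ℂ × V, 2 < ‖q.1‖ → Φ q = 0) (hδ : C * δ ≤ 1 / 2)
    (hLip : ∀ z v w, ‖Φ (z, v) - Φ (z, w)‖ ≤ δ * ‖v - w‖) :
    ∃ u : ℂ →ᵇ V, ∀ z, u z = cauchyTransform J₀ (fun w => Φ (w, u w)) z := by
  have hc : ∀ u : ℂ →ᵇ V, Continuous fun w => Φ (w, u w) := fun u =>
    hΦ.comp (continuous_id.prodMk u.continuous)
  have hs : ∀ u : ℂ →ᵇ V, ∀ w, 2 < ‖w‖ → Φ (w, u w) = 0 := fun u w hw => hsupp (w, u w) hw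
  have hcs : ∀ u : ℂ →ᵇ V, HasCompactSupport fun w => Φ (w, u w) := fun u =>
    hasCompactSupport_of_norm_gt (c := 0) (r := 2) (fun w hw => hs u w (by simpa using hw))
  have hbd : ∀ u : ℂ →ᵇ V, ∃ M, ∀ z, ‖cauchyTransform J₀ (fun w => Φ (w, u w)) z‖ ≤ M := by
    intro u
    obtain ⟨M, hM⟩ := (hcs u).exists_bound_of_continuous (hc u)
    refine ⟨C * M, hC _ (hc u) 0 M hM fun w hw => hs u w ?_⟩
    rw [sub_zero] at hw
    linarith
  choose M hM using hbd
  let S : (ℂ →ᵇ V) → (ℂ →ᵇ V) := fun u =>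
    ofNormedAddCommGroup (cauchyTransform J₀ fun w => Φ (w, u w))
      (continuous_cauchyTransform J₀ (hc u) (hs u)) (M u) (hM u)
  have hS : ContractingWith (1 / 2) S := by
    refine ⟨by
      rw [← NNReal.coe_lt_coe]; norm_num, LipschitzWith.of_dist_le_mul fun u v => ?_⟩
    rw [dist_le (by positivity)]
    intro z
    rw [dist_eq_norm]
    change ‖cauchyTransform J₀ (fun w => Φ (w, u w)) z -
      cauchyTransform J₀ (fun w => Φ (w, v w)) z‖ ≤ _
    rw [← cauchyTransform_sub J₀ (hc u) (hcs u) (hc v) (hcs v)]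
    by_cases hδ0 : 0 ≤ δ
    · refine (hC _ ((hc u).sub (hc v)) 0 (δ * dist u v) (fun w => ?_) (fun w hw => ?_) z).trans ?_
      · refine (hLip _ _ _).trans ?_
        rw [← dist_eq_norm]
        gcongr
        exact dist_coe_le_dist w
      · rw [sub_zero] at hw
        rw [Pi.sub_apply, hs u w (by linarith), hs v w (by linarith), sub_zero]
      · rw [← mul_assoc]
        push_cast
        gcongr
    · refine (hC _ ((hc u).sub (hc v)) 0 0 (fun w => ?_) (fun w hw => ?_) z).trans ?_
      · refine (hLip _ _ _).trans ?_
        exact mul_nonpos_of_nonpos_of_nonneg (not_le.mp hδ0).le (norm_nonneg _)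
      · rw [sub_zero] at hw
        rw [Pi.sub_apply, hs u w (by linarith), hs v w (by linarith), sub_zero]
      · rw [mul_zero]; positivity
  refine ⟨hS.fixedPoint, fun z => ?_⟩
  have := hS.fixedPoint_isFixedPt
  exact (DFunLike.congr_fun this z).symm

lemma norm_image_add_sub_fderiv_le {W X : Type*} [NormedAddCommGroup W] [NormedSpace ℝ W]
    [NormedAddCommGroup X] [NormedSpace ℝ X] {H : W → X} (hH : Differentiable ℝ H)
    {K : NNReal} (hK : LipschitzWith K (fderiv ℝ H)) (q k : W) :
    ‖H (q + k) - H q - fderiv ℝ H q k‖ ≤ K * ‖k‖ ^ 2 := by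
  have h := (convex_closedBall q ‖k‖).norm_image_sub_le_of_norm_fderiv_le' (𝕜 := ℝ) (f := H)
    (φ := fderiv ℝ H q) (C := K * ‖k‖) (fun x _ => hH x) (fun x hx => ?_)
    (mem_closedBall_self (norm_nonneg k)) (y := q + k) (by simp)
  · rw [add_sub_cancel_left] at h
    rw [pow_two, ← mul_assoc]
    exact h
  · rw [← dist_eq_norm]
    refine (hK.dist_le_mul _ _).trans ?_
    gcongr
    exact hx

lemma contDiff_of_eq_cauchyTransform [CompleteSpace V] {J₀ : V →L[ℝ] V} {C δ : ℝ}
    (hC : IsCauchyBound J₀ C) {H : ℂ × V → V} (hH : ContDiff ℝ 2 H)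
    (hHc : HasCompactSupport H) (hsupp : ∀ q : ℂ × V, 2 < ‖q.1‖ → H q = 0)
    (hδ : C * δ ≤ 1 / 2) (hDH : ∀ q, ‖fderiv ℝ H q‖ ≤ δ) {u : ℂ →ᵇ V}
    (hu : ∀ z, u z = cauchyTransform J₀ (fun w => H (w, u w)) z) :
    ContDiff ℝ 1 u ∧ ∀ h z, fderiv ℝ u z h =
      cauchyTransform J₀ (fun w => fderiv ℝ (fun w => H (w, u w)) w h) z := by
  have hδ0 : 0 ≤ δ := (norm_nonneg _).trans (hDH 0)
  have hdiff : Differentiable ℝ H := hH.differentiable two_ne_zero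
  have hdH1 : ContDiff ℝ 1 (fderiv ℝ H) := hH.fderiv_right (by norm_num)
  have hdHc : Continuous (fderiv ℝ H) := hdH1.continuous
  obtain ⟨K, hK⟩ := hdH1.lipschitzWith_of_hasCompactSupport (hHc.fderiv ℝ) one_ne_zero
  have hdsupp : ∀ q : ℂ × V, 2 < ‖q.1‖ → fderiv ℝ H q = 0 := by
    intro q hq
    have hopen : IsOpen {q : ℂ × V | 2 < ‖q.1‖} := isOpen_lt continuous_const (by fun_prop)
    have hev : H =ᶠ[𝓝 q] fun _ => 0 := by
      filter_upwards [hopen.mem_nhds hq] with p hp using hsupp p hp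
    rw [hev.fderiv_eq]
    simp
  have hNc : Continuous fun w => H (w, u w) :=
    hH.continuous.comp (continuous_id.prodMk u.continuous)
  have hNcs : HasCompactSupport fun w => H (w, u w) :=
    hasCompactSupport_of_norm_gt (c := 0) (r := 2)
      (fun w hw => hsupp _ (by simpa using hw))
  -- the solution of the linearized equation in each direction
  have hlin : ∀ h : ℂ, ∃ v : ℂ →ᵇ V, ∀ z,
      v z = cauchyTransform J₀ (fun w => fderiv ℝ H (w, u w) (h, v w)) z := by
    intro h
    refine exists_fixedPoint_cauchyTransform hC
      (Φ := fun q => fderiv ℝ H (q.1, u q.1) (h, q.2)) ?_ ?_ hδ ?_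
    · have : Continuous fun q : ℂ × V => fderiv ℝ H (q.1, u q.1) :=
        hdHc.comp (continuous_fst.prodMk (u.continuous.comp continuous_fst))
      exact this.clm_apply (by fun_prop)
    · intro q hq
      simp only [hdsupp (q.1, u q.1) hq, zero_apply]
    · intro z v w
      simp only [← map_sub]
      refine (ContinuousLinearMap.le_of_opNorm_le _ (hDH _) _).trans ?_
      simp [Prod.norm_def]
  obtain ⟨v₁, hv₁⟩ := hlin 1
  obtain ⟨v₂, hv₂⟩ := hlin Complex.I
  have hLc : ∀ (h : ℂ) (v : ℂ →ᵇ V), Continuous fun w => fderiv ℝ H (w, u w) (h, v w) := by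
    intro h v
    have : Continuous fun w => fderiv ℝ H (w, u w) :=
      hdHc.comp (continuous_id.prodMk u.continuous)
    exact this.clm_apply (continuous_const.prodMk v.continuous)
  have hLcs : ∀ (h : ℂ) (v : ℂ →ᵇ V),
      HasCompactSupport fun w => fderiv ℝ H (w, u w) (h, v w) := fun h v =>
    hasCompactSupport_of_norm_gt (c := 0) (r := 2) (fun w hw => by
      rw [hdsupp (w, u w) (by simpa using hw), zero_apply])
  set vl : ℂ → ℂ →ᵇ V := fun h => h.re • v₁ + h.im • v₂ with hvl
  have hvl_eq : ∀ h z, vl h z =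
      cauchyTransform J₀ (fun w => fderiv ℝ H (w, u w) (h, vl h w)) z := by
    intro h z
    have hsplit : ∀ w, fderiv ℝ H (w, u w) (h, vl h w) =
        h.re • fderiv ℝ H (w, u w) (1, v₁ w) + h.im • fderiv ℝ H (w, u w) (Complex.I, v₂ w) := by
      intro w
      rw [← map_smul, ← map_smul, ← map_add]
      congr 1
      refine Prod.ext ?_ ?_
      · apply Complex.ext <;> simp
      · simp [hvl]
    simp_rw [hsplit]
    have hsc : ∀ (c : ℝ) (k : ℂ) (v : ℂ →ᵇ V),
        Continuous (fun w => c • fderiv ℝ H (w, u w) (k, v w)) ∧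
        HasCompactSupport (fun w => c • fderiv ℝ H (w, u w) (k, v w)) := fun c k v =>
      ⟨(hLc k v).const_smul c, (hLcs k v).smul_left (f := fun _ => c)⟩
    rw [cauchyTransform_add J₀ (hsc h.re 1 v₁).1 (hsc h.re 1 v₁).2
      (hsc h.im Complex.I v₂).1 (hsc h.im Complex.I v₂).2]
    have hsm : ∀ (c : ℝ) (g : ℂ → V), cauchyTransform J₀ (fun w => c • g w) z =
        c • cauchyTransform J₀ g z := by
      intro c g
      unfold cauchyTransform
      rw [← integral_smul]
      simp only [map_smul]
    rw [hsm, hsm, ← hv₁, ← hv₂]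
    simp [hvl]
  have hd : ∀ h : ℂ, ‖h‖ ≤ 1 → ∀ z, ‖u (z + h) - u z‖ ≤ ‖h‖ := by
    intro h hh z
    have hmain := norm_le_of_norm_le_add_half (d := fun z => u (z + h) - u z) (A := ‖h‖ / 2)
      ⟨‖u‖ + ‖u‖, fun z => (norm_sub_le _ _).trans
        (add_le_add (u.norm_coe_le_norm _) (u.norm_coe_le_norm _))⟩ (fun B hB z => ?_) z
    · simpa [mul_div_cancel₀] using hmain
    · have hB0 : 0 ≤ B := (norm_nonneg _).trans (hB 0)
      have htr : Continuous fun w => H (w + h, u (w + h)) :=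
        hNc.comp (continuous_id.add continuous_const)
      have htrs : HasCompactSupport fun w => H (w + h, u (w + h)) :=
        hNcs.comp_homeomorph (Homeomorph.addRight h)
      rw [hu z, hu (z + h), ← cauchyTransform_translate J₀ (fun w => H (w, u w)),
        ← cauchyTransform_sub J₀ htr htrs hNc hNcs]
      refine (hC _ (htr.sub hNc) 0 (δ * (‖h‖ + B)) (fun w => ?_) (fun w hw => ?_) z).trans ?_
      · have := convex_univ.norm_image_sub_le_of_norm_fderiv_le (𝕜 := ℝ) (f := H) (C := δ)
          (fun x _ => hdiff x) (fun x _ => hDH x) (mem_univ (w, u w)) (mem_univ (w + h, u (w + h)))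
        refine this.trans ?_
        gcongr
        rw [Prod.mk_sub_mk, add_sub_cancel_left, Prod.norm_def]
        refine max_le (le_add_of_nonneg_right hB0) ((hB w).trans ?_)
        exact le_add_of_nonneg_left (norm_nonneg _)
      · rw [sub_zero] at hw
        simp only [Pi.sub_apply]
        rw [hsupp (w, u w) (show 2 < ‖w‖ by linarith), hsupp (w + h, _), sub_zero]
        have := norm_sub_norm_le w (-h)
        rw [norm_neg, sub_neg_eq_add] at this
        simp only
        linarith
      · rw [← mul_assoc]
        have : C * δ * (‖h‖ + B) ≤ 1 / 2 * (‖h‖ + B) := by gcongr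
        linarith
  have hr : ∀ h : ℂ, ‖h‖ ≤ 1 → ∀ z, ‖u (z + h) - u z - vl h z‖ ≤ 2 * (C * K * ‖h‖ ^ 2) := by
    intro h hh z
    refine norm_le_of_norm_le_add_half (d := fun z => u (z + h) - u z - vl h z)
      ⟨‖u‖ + ‖u‖ + ‖vl h‖, fun z => (norm_sub_le _ _).trans (add_le_add ((norm_sub_le _ _).trans
        (add_le_add (u.norm_coe_le_norm _) (u.norm_coe_le_norm _))) ((vl h).norm_coe_le_norm _))⟩
      (fun B hB z => ?_) z
    have hB0 : 0 ≤ B := (norm_nonneg _).trans (hB 0)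
    have htr : Continuous fun w => H (w + h, u (w + h)) :=
      hNc.comp (continuous_id.add continuous_const)
    have htrs : HasCompactSupport fun w => H (w + h, u (w + h)) :=
      hNcs.comp_homeomorph (Homeomorph.addRight h)
    have hdc : Continuous fun w => H (w + h, u (w + h)) - H (w, u w) := htr.sub hNc
    have hdcs : HasCompactSupport fun w => H (w + h, u (w + h)) - H (w, u w) := htrs.sub hNcs
    rw [hu z, hu (z + h), ← cauchyTransform_translate J₀ (fun w => H (w, u w)),
      ← cauchyTransform_sub J₀ htr htrs hNc hNcs, hvl_eq h z,
      ← cauchyTransform_sub J₀ hdc hdcs (hLc h _) (hLcs h _)]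
    refine (hC _ (hdc.sub (hLc h (vl h))) 0 (K * ‖h‖ ^ 2 + δ * B) (fun w => ?_)
      (fun w hw => ?_) z).trans ?_
    · have hsplit : H (w + h, u (w + h)) - H (w, u w) - fderiv ℝ H (w, u w) (h, vl h w) =
          (H ((w, u w) + (h, u (w + h) - u w)) - H (w, u w) -
            fderiv ℝ H (w, u w) (h, u (w + h) - u w)) +
          fderiv ℝ H (w, u w) (0, u (w + h) - u w - vl h w) := by
        have : ((0 : ℂ), u (w + h) - u w - vl h w) =
            (h, u (w + h) - u w) - (h, vl h w) := by simp
        rw [this, map_sub]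
        simp only [Prod.mk_add_mk, add_sub_cancel]
        abel
      rw [Pi.sub_apply, hsplit]
      refine (norm_add_le _ _).trans (add_le_add ?_ ?_)
      · refine (norm_image_add_sub_fderiv_le hdiff hK _ _).trans ?_
        gcongr
        rw [Prod.norm_def]
        exact max_le le_rfl (hd h hh w)
      · refine (ContinuousLinearMap.le_of_opNorm_le _ (hDH _) _).trans ?_
        gcongr
        rw [Prod.norm_def]
        exact max_le (by simpa using hB0) (hB w)
    · rw [sub_zero] at hw
      simp only [Pi.sub_apply]
      rw [hsupp (w, u w) (show 2 < ‖w‖ by linarith), hsupp (w + h, _),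
        hdsupp (w, u w) (show 2 < ‖w‖ by linarith)]
      · simp
      · have := norm_sub_norm_le w (-h)
        rw [norm_neg, sub_neg_eq_add] at this
        simp only
        linarith
    · have : C * δ * B ≤ 1 / 2 * B := by gcongr
      linarith
  set L : ℂ → ℂ →L[ℝ] V := fun z =>
    Complex.reCLM.smulRight (v₁ z) + Complex.imCLM.smulRight (v₂ z) with hL
  have hLvl : ∀ z h, L z h = vl h z := by
    intro z h
    simp [hL, hvl]
  have hderiv : ∀ z, HasFDerivAt u (L z) z := by
    intro z
    rw [hasFDerivAt_iff_isLittleO_nhds_zero]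
    have hO : (fun h => u (z + h) - u z - L z h) =O[𝓝 0] fun h : ℂ => ‖h‖ ^ 2 := by
      refine IsBigO.of_bound (2 * (C * K)) ?_
      filter_upwards [closedBall_mem_nhds (0 : ℂ) one_pos] with h hh
      rw [hLvl]
      refine (hr h (by simpa using hh) z).trans (le_of_eq ?_)
      rw [Real.norm_of_nonneg (by positivity)]
      ring
    refine hO.trans_isLittleO ?_
    have := (isLittleO_norm_pow_id (E' := ℂ) one_lt_two)
    exact this
  have hfd : fderiv ℝ u = L := funext fun z => (hderiv z).fderiv
  have hLcont : Continuous L := by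
    have h1 : Continuous fun z => v₁ z := v₁.continuous
    have h2 : Continuous fun z => v₂ z := v₂.continuous
    exact ((ContinuousLinearMap.smulRightL ℝ ℂ V Complex.reCLM).continuous.comp h1).add
      ((ContinuousLinearMap.smulRightL ℝ ℂ V Complex.imCLM).continuous.comp h2)
  refine ⟨contDiff_one_iff_fderiv.mpr ⟨fun z => (hderiv z).differentiableAt, by rwa [hfd]⟩, ?_⟩
  intro h z
  rw [hfd, hLvl, hvl_eq]
  congr 1
  ext w
  have h1 : HasFDerivAt (fun w => (w, u w)) ((ContinuousLinearMap.id ℝ ℂ).prod (L w)) w :=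
    (hasFDerivAt_id w).prodMk (hderiv w)
  have h2 := (hdiff (w, u w)).hasFDerivAt.comp w h1
  rw [show (fun w => H (w, u w)) = H ∘ fun w => (w, u w) from rfl, h2.fderiv]
  simp [hLvl]

end FixedPoint

section DiscEquation

open MeasureTheory BoundedContinuousFunction

variable {V : Type*} [NormedAddCommGroup V] [NormedSpace ℝ V]

lemma cauchyTransform_smul (J₀ : V →L[ℝ] V) (c : ℝ) (g : ℂ → V) (z : ℂ) :
    cauchyTransform J₀ (fun w => c • g w) z = c • cauchyTransform J₀ g z := by
  unfold cauchyTransform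
  rw [← integral_smul]
  simp only [map_smul]

lemma continuous_fderiv_apply_const {g : ℂ → V} (hg : ContDiff ℝ 1 g) (h : ℂ) :
    Continuous fun w => fderiv ℝ g w h :=
  (hg.continuous_fderiv one_ne_zero).clm_apply continuous_const

lemma continuous_delOp (J₀ : V →L[ℝ] V) {g : ℂ → V} (hg : ContDiff ℝ 1 g) :
    Continuous (delOp J₀ g) := by
  have h1 := continuous_fderiv_apply_const hg 1
  have h2 := continuous_fderiv_apply_const hg Complex.I
  unfold delOp
  fun_prop

/-- If differentiation commutes with the Cauchy transform in `u = T N`, then `T` also intertwines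
the Wirtinger operators, and inverts `∂/∂ζ̄`. -/
lemma dbarOp_delOp_of_fderiv_eq_cauchyTransform [CompleteSpace V] {J₀ : V →L[ℝ] V}
    (hJ₀ : ∀ v, J₀ (J₀ v) = -v) {u N : ℂ → V} (hN : ContDiff ℝ 1 N) (hNs : HasCompactSupport N)
    (hu : ∀ h z, fderiv ℝ u z h = cauchyTransform J₀ (fun w => fderiv ℝ N w h) z) (z : ℂ) :
    dbarOp J₀ u z = N z ∧ delOp J₀ u z = cauchyTransform J₀ (delOp J₀ N) z := by
  have hc := continuous_fderiv_apply_const hN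
  have hcs : ∀ h, HasCompactSupport fun w => fderiv ℝ N w h := fun h => hNs.fderiv_apply ℝ h
  have hJc : Continuous fun w => J₀ (fderiv ℝ N w Complex.I) := J₀.continuous.comp (hc _)
  have hJcs : HasCompactSupport fun w => J₀ (fderiv ℝ N w Complex.I) :=
    (hcs Complex.I).comp_left (map_zero J₀)
  have hJ : J₀ (cauchyTransform J₀ (fun w => fderiv ℝ N w Complex.I) z) =
      cauchyTransform J₀ (fun w => J₀ (fderiv ℝ N w Complex.I)) z :=
    map_cauchyTransform J₀ J₀ J₀ (fun _ => rfl) (hc _) (hcs _) z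
  constructor
  · rw [← cauchyTransform_dbarOp J₀ hJ₀ hN hNs z]
    unfold dbarOp
    rw [hu, hu, cauchyTransform_smul, cauchyTransform_add J₀ (hc 1) (hcs 1) hJc hJcs, hJ]
  · unfold delOp
    rw [hu, hu, cauchyTransform_smul, cauchyTransform_sub J₀ (hc 1) (hcs 1) hJc hJcs, hJ]

lemma fderiv_one_eq (J₀ : V →L[ℝ] V) (g : ℂ → V) (z : ℂ) :
    fderiv ℝ g z 1 = delOp J₀ g z + dbarOp J₀ g z := by
  unfold delOp dbarOp
  module

lemma fderiv_I_eq {J₀ : V →L[ℝ] V} (hJ₀ : ∀ v, J₀ (J₀ v) = -v) (g : ℂ → V) (z : ℂ) :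
    fderiv ℝ g z Complex.I = J₀ (delOp J₀ g z - dbarOp J₀ g z) := by
  unfold delOp dbarOp
  simp only [map_sub, map_add, map_smul, hJ₀]
  module

/-- The nonlinearity of the equation for `∂f/∂ζ` obtained by differentiating
`∂f/∂ζ̄ = ρ(ζ, f) ∂f/∂ζ`. -/
def prolongedTerm (J₀ : V →L[ℝ] V) (ρ : ℂ × V → V →L[ℝ] V) (q : ℂ × V) (a : V) : V :=
  Ring.inverse (1 - ρ q) ((1 / 2 : ℝ) • (fderiv ℝ ρ q (1, a + ρ q a) a -
    J₀ (fderiv ℝ ρ q (Complex.I, J₀ (a - ρ q a)) a)))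

lemma delOp_sub_prolongedTerm {J₀ : V →L[ℝ] V}
    {ρ : ℂ × V → V →L[ℝ] V} {f a : ℂ → V} {e : V} {z : ℂ} (hρ : DifferentiableAt ℝ ρ (z, f z))
    (hf : DifferentiableAt ℝ f z) (ha : DifferentiableAt ℝ a z)
    (hanti : ∀ v, J₀ (ρ (z, f z) v) = -ρ (z, f z) (J₀ v)) (hunit : IsUnit (1 - ρ (z, f z)))
    (hx : fderiv ℝ f z 1 = a z + e + ρ (z, f z) (a z))
    (hy : fderiv ℝ f z Complex.I = J₀ (a z + e - ρ (z, f z) (a z)))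
    (hda : dbarOp J₀ a z = prolongedTerm J₀ ρ (z, f z) (a z)) :
    delOp J₀ (fun w => ρ (w, f w) (a w)) z - prolongedTerm J₀ ρ (z, f z) (a z) =
      (1 / 2 : ℝ) • (fderiv ℝ ρ (z, f z) (0, e) (a z) -
        J₀ (fderiv ℝ ρ (z, f z) (0, J₀ e) (a z))) := by
  have h1 : HasFDerivAt (fun w => (w, f w)) ((ContinuousLinearMap.id ℝ ℂ).prod (fderiv ℝ f z)) z :=
    (hasFDerivAt_id z).prodMk hf.hasFDerivAt
  have h2 : HasFDerivAt (fun w => ρ (w, f w)) _ z := hρ.hasFDerivAt.comp z h1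
  have h3 := h2.clm_apply ha.hasFDerivAt
  have hD : ∀ h, fderiv ℝ (fun w => ρ (w, f w) (a w)) z h =
      fderiv ℝ ρ (z, f z) (h, fderiv ℝ f z h) (a z) + ρ (z, f z) (fderiv ℝ a z h) := by
    intro h
    rw [h3.fderiv]
    simp [add_comm]
  set q := (z, f z) with hq
  set G := prolongedTerm J₀ ρ q (a z) with hG
  have hGeq : G - ρ q G = (1 / 2 : ℝ) • (fderiv ℝ ρ q (1, a z + ρ q (a z)) (a z) -
      J₀ (fderiv ℝ ρ q (Complex.I, J₀ (a z - ρ q (a z))) (a z))) := by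
    have := congrArg (fun L : V →L[ℝ] V =>
      L ((1 / 2 : ℝ) • (fderiv ℝ ρ q (1, a z + ρ q (a z)) (a z) -
      J₀ (fderiv ℝ ρ q (Complex.I, J₀ (a z - ρ q (a z))) (a z))))) (Ring.mul_inverse_cancel _ hunit)
    exact this
  have e1 : ((1 : ℂ), a z + e + ρ q (a z)) = (1, a z + ρ q (a z)) + (0, e) := by
    ext1
    · simp
    · simp only [Prod.snd_add]; abel
  have e2 : (Complex.I, J₀ (a z + e - ρ q (a z))) =
      (Complex.I, J₀ (a z - ρ q (a z))) + (0, J₀ e) := by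
    ext1
    · simp
    · simp only [Prod.snd_add, ← map_add]; congr 1; abel
  have hρG : ρ q G = (1 / 2 : ℝ) • (ρ q (fderiv ℝ a z 1) - J₀ (ρ q (fderiv ℝ a z Complex.I))) := by
    rw [← hda, hanti]
    unfold dbarOp
    simp only [map_smul, map_add]
    module
  unfold delOp
  rw [hD, hD, hx, hy, e1, e2, map_add, map_add]
  have hGsum := congrArg₂ (· + ·) hGeq hρG
  simp only [sub_add_cancel] at hGsum
  rw [hGsum]
  simp only [_root_.add_apply, map_add, smul_add, smul_sub]
  abel

lemma isUnit_one_sub_of_norm_le_half [CompleteSpace V] {A : V →L[ℝ] V} (hA : ‖A‖ ≤ 1 / 2) :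
    IsUnit (1 - A) :=
  isUnit_one_sub_of_norm_lt_one (hA.trans_lt (by norm_num))

lemma contDiff_prolongedTerm [CompleteSpace V] {Y : Type*} [NormedAddCommGroup Y] [NormedSpace ℝ Y]
    {J₀ : V →L[ℝ] V} {ρ : Y → ℂ × V → V →L[ℝ] V} {q : Y → ℂ × V} {a : Y → V}
    (hρ : ContDiff ℝ (⊤ : ℕ∞) (Function.uncurry ρ)) (hq : ContDiff ℝ (⊤ : ℕ∞) q)
    (ha : ContDiff ℝ (⊤ : ℕ∞) a) (hunit : ∀ y, IsUnit (1 - ρ y (q y))) :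
    ContDiff ℝ (⊤ : ℕ∞) fun y => prolongedTerm J₀ (ρ y) (q y) (a y) := by
  have h1 : ContDiff ℝ (⊤ : ℕ∞) fun y => ρ y (q y) := hρ.comp (contDiff_id.prodMk hq)
  have h2 : ContDiff ℝ (⊤ : ℕ∞) fun y => fderiv ℝ (ρ y) (q y) :=
    ContDiff.fderiv hρ hq (by simp)
  have h3 : ContDiff ℝ (⊤ : ℕ∞) fun y => Ring.inverse (1 - ρ y (q y)) := by
    rw [contDiff_iff_contDiffAt]
    intro y
    obtain ⟨U, hU⟩ := hunit y
    have := contDiffAt_ringInverse ℝ U (n := (⊤ : ℕ∞))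
    rw [hU] at this
    exact this.comp y (contDiff_const.sub h1).contDiffAt
  unfold prolongedTerm
  have h4 : ContDiff ℝ (⊤ : ℕ∞) fun y => ρ y (q y) (a y) := h1.clm_apply ha
  refine h3.clm_apply (contDiff_const.smul (ContDiff.sub ?_ (J₀.contDiff.comp ?_)))
  · exact (h2.clm_apply (contDiff_const.prodMk (ha.add h4))).clm_apply ha
  · exact (h2.clm_apply (contDiff_const.prodMk (J₀.contDiff.comp (ha.sub h4)))).clm_apply ha

end DiscEquation

section DiscExistence

open MeasureTheory BoundedContinuousFunction

variable {V : Type*} [NormedAddCommGroup V] [NormedSpace ℝ V]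

/-- The right-hand side of the `∂/∂ζ̄`-system for `(φ, α)`, where `f = ζX + φ` and
`∂f/∂ζ = X + α`, truncated by the cutoff `Ψ`. -/
def discNonlinearity (J₀ : V →L[ℝ] V) (Ψ : V × V → ℝ) (X : V) (ρ : ℂ × V → V →L[ℝ] V)
    (q : ℂ × (V × V)) : V × V :=
  Ψ q.2 • (ρ (q.1, complexAct J₀ q.1 X + q.2.1) (X + q.2.2),
    prolongedTerm J₀ ρ (q.1, complexAct J₀ q.1 X + q.2.1) (X + q.2.2))

lemma contDiff_complexAct_apply {n : WithTop ℕ∞} (J₀ : V →L[ℝ] V) (X : V) :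
    ContDiff ℝ n fun z => complexAct J₀ z X := by
  simp only [complexAct_apply]
  exact (Complex.reCLM.contDiff.smul contDiff_const).add
    (Complex.imCLM.contDiff.smul contDiff_const)

lemma contDiff_discNonlinearity [CompleteSpace V] {Y : Type*} [NormedAddCommGroup Y]
    [NormedSpace ℝ Y] {J₀ : V →L[ℝ] V} {Ψ : V × V → ℝ} {X : V} {ρ : Y → ℂ × V → V →L[ℝ] V}
    (hΨ : ContDiff ℝ (⊤ : ℕ∞) Ψ) (hρ : ContDiff ℝ (⊤ : ℕ∞) (Function.uncurry ρ))
    (hhalf : ∀ y q, ‖ρ y q‖ ≤ 1 / 2) :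
    ContDiff ℝ (⊤ : ℕ∞) fun p : Y × (ℂ × (V × V)) => discNonlinearity J₀ Ψ X (ρ p.1) p.2 := by
  have hq : ContDiff ℝ (⊤ : ℕ∞) fun p : Y × (ℂ × (V × V)) =>
      (p.2.1, complexAct J₀ p.2.1 X + p.2.2.1) := by
    refine ContDiff.prodMk (by fun_prop) (ContDiff.add ?_ (by fun_prop))
    exact (contDiff_complexAct_apply J₀ X).comp (contDiff_fst.comp contDiff_snd)
  have ha : ContDiff ℝ (⊤ : ℕ∞) fun p : Y × (ℂ × (V × V)) => X + p.2.2.2 := by fun_prop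
  have hρ' : ContDiff ℝ (⊤ : ℕ∞)
      (Function.uncurry fun p : Y × (ℂ × (V × V)) => ρ p.1) :=
    hρ.comp (ContDiff.prodMk (by fun_prop) (by fun_prop) :
      ContDiff ℝ (⊤ : ℕ∞) fun r : (Y × (ℂ × (V × V))) × (ℂ × V) => (r.1.1, r.2))
  have hρ1 : ContDiff ℝ (⊤ : ℕ∞) fun p : Y × (ℂ × (V × V)) =>
      ρ p.1 (p.2.1, complexAct J₀ p.2.1 X + p.2.2.1) := hρ.comp (contDiff_fst.prodMk hq)
  unfold discNonlinearity
  refine ContDiff.smul (hΨ.comp (by fun_prop)) (ContDiff.prodMk (hρ1.clm_apply ha) ?_)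
  exact contDiff_prolongedTerm hρ' hq ha fun p => isUnit_one_sub_of_norm_le_half (hhalf _ _)

lemma fderiv_eq_zero_of_norm_gt {W : Type*} [NormedAddCommGroup W] [NormedSpace ℝ W]
    {ρ : ℂ × V → W} {r : ℝ} (hρs : ∀ q, r < ‖q.1‖ → ρ q = 0) {q : ℂ × V} (hq : r < ‖q.1‖) :
    fderiv ℝ ρ q = 0 := by
  have hopen : IsOpen {q : ℂ × V | r < ‖q.1‖} := isOpen_lt continuous_const (by fun_prop)
  have hev : ρ =ᶠ[𝓝 q] fun _ => 0 := by
    filter_upwards [hopen.mem_nhds hq] with p hp using hρs p hp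
  rw [hev.fderiv_eq]
  simp

lemma prolongedTerm_eq_zero {J₀ : V →L[ℝ] V} {ρ : ℂ × V → V →L[ℝ] V} {q : ℂ × V}
    (h : fderiv ℝ ρ q = 0) (a : V) : prolongedTerm J₀ ρ q a = 0 := by
  simp [prolongedTerm, h]

lemma discNonlinearity_eq_zero {J₀ : V →L[ℝ] V} {Ψ : V × V → ℝ} {X : V} {ρ : ℂ × V → V →L[ℝ] V}
    (hρs : ∀ q, 2 < ‖q.1‖ → ρ q = 0) {q : ℂ × (V × V)} (hq : 2 < ‖q.1‖) :
    discNonlinearity J₀ Ψ X ρ q = 0 := by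
  have h1 := hρs (q.1, complexAct J₀ q.1 X + q.2.1) hq
  have h2 : fderiv ℝ ρ (q.1, complexAct J₀ q.1 X + q.2.1) = 0 := fderiv_eq_zero_of_norm_gt hρs hq
  unfold discNonlinearity
  rw [h1, prolongedTerm_eq_zero h2]
  simp

lemma exists_disc_of_small [CompleteSpace V] [FiniteDimensional ℝ V] {J₀ : V →L[ℝ] V}
    (hJ₀ : ∀ v, J₀ (J₀ v) = -v)
    {ρ : ℂ × V → V →L[ℝ] V} (hρ : ContDiff ℝ (⊤ : ℕ∞) ρ) (hρs : ∀ q, 2 < ‖q.1‖ → ρ q = 0)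
    (hhalf : ∀ q, ‖ρ q‖ ≤ 1 / 2) (hanti : ∀ q v, J₀ (ρ q v) = -ρ q (J₀ v))
    {Ψ : V × V → ℝ} (hΨ : ContDiff ℝ (⊤ : ℕ∞) Ψ) (hΨc : HasCompactSupport Ψ)
    (hΨ1 : ∀ v, ‖v‖ ≤ 1 → Ψ v = 1) (X : V) {C δ : ℝ}
    (hC : IsCauchyBound (J₀.prodMap J₀) C) (hCδ : C * δ ≤ 1 / 2)
    (hH0 : ∀ q, ‖discNonlinearity J₀ Ψ X ρ q‖ ≤ δ)
    (hH1 : ∀ q, ‖fderiv ℝ (discNonlinearity J₀ Ψ X ρ) q‖ ≤ δ) {C' κ : ℝ}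
    (hC' : IsCauchyBound J₀ C') (hκ0 : 0 ≤ κ)
    (hκ : ∀ q v a, ‖fderiv ℝ ρ q (0, v) a‖ ≤ κ * ‖v‖ * ‖a‖)
    (hsmall : C' * (κ * (1 + ‖J₀‖ * ‖J₀‖) * (‖X‖ + 1)) ≤ 1) :
    ∃ φ α : ℂ → V, ContDiff ℝ 2 φ ∧ (∀ z, ‖φ z‖ ≤ C * δ) ∧ (∀ z, ‖α z‖ ≤ C * δ) ∧
      ∀ z, fderiv ℝ (fun z => complexAct J₀ z X + φ z) z 1 =
          X + α z + ρ (z, complexAct J₀ z X + φ z) (X + α z) ∧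
        fderiv ℝ (fun z => complexAct J₀ z X + φ z) z Complex.I =
          J₀ (X + α z - ρ (z, complexAct J₀ z X + φ z) (X + α z)) := by
  set H := discNonlinearity J₀ Ψ X ρ with hHdef
  have hHsm : ContDiff ℝ (⊤ : ℕ∞) H := by
    have h := contDiff_discNonlinearity (Y := ℝ) (J₀ := J₀) (X := X) (ρ := fun _ => ρ) hΨ
      (hρ.comp contDiff_snd) (fun _ => hhalf)
    exact h.comp (contDiff_const.prodMk contDiff_id : ContDiff ℝ (⊤ : ℕ∞)
      fun q : ℂ × (V × V) => ((0 : ℝ), q))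
  have hH2 : ContDiff ℝ 2 H := hHsm.of_le (WithTop.coe_le_coe.2 (le_top : (2 : ℕ∞) ≤ ⊤))
  have hHs : ∀ q : ℂ × (V × V), 2 < ‖q.1‖ → H q = 0 := fun q hq =>
    discNonlinearity_eq_zero hρs hq
  have hHc : HasCompactSupport H := by
    refine HasCompactSupport.intro ((isCompact_closedBall (0 : ℂ) 2).prod hΨc.isCompact) ?_
    intro q hq
    by_cases h : 2 < ‖q.1‖
    · exact hHs q h
    · have h2 : Ψ q.2 = 0 := by
        by_contra hne
        exact hq ⟨by simpa using h, subset_tsupport _ hne⟩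
      rw [hHdef, discNonlinearity, h2, zero_smul]
  obtain ⟨u, hu⟩ := exists_fixedPoint_cauchyTransform hC hHsm.continuous hHs hCδ (by
    intro z v w
    have := convex_univ.norm_image_sub_le_of_norm_fderiv_le (𝕜 := ℝ) (f := H) (C := δ)
      (fun x _ => (hH2.differentiable two_ne_zero) x) (fun x _ => hH1 x)
      (mem_univ (z, w)) (mem_univ (z, v))
    refine this.trans (le_of_eq ?_)
    simp [Prod.norm_def])
  obtain ⟨hu1, hud⟩ := contDiff_of_eq_cauchyTransform hC hH2 hHc hHs hCδ hH1 hu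
  set N : ℂ → V × V := fun w => H (w, u w) with hN
  have hN1 : ContDiff ℝ 1 N := (hH2.of_le one_le_two).comp (contDiff_id.prodMk hu1)
  have hNz : ∀ w, 2 < ‖w‖ → N w = 0 := fun w hw => hHs (w, u w) hw
  have hNs : HasCompactSupport N :=
    hasCompactSupport_of_norm_gt (c := 0) (r := 2) (fun w hw => hNz w (by simpa using hw))
  have hub : ∀ z, ‖u z‖ ≤ C * δ := by
    intro z
    rw [hu z]
    refine hC _ hN1.continuous 0 δ (fun w => hH0 _) (fun w hw => hNz w ?_) z
    rw [sub_zero] at hw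
    linarith
  have hΨu : ∀ z, Ψ (u z) = 1 := fun z => hΨ1 _ ((hub z).trans (by linarith))
  set φ : ℂ → V := fun z => (u z).1 with hφ
  set α : ℂ → V := fun z => (u z).2 with hα
  set f : ℂ → V := fun z => complexAct J₀ z X + φ z with hf
  set a : ℂ → V := fun z => X + α z with ha
  have hφ1 : ContDiff ℝ 1 φ := contDiff_fst.comp hu1
  have hα1 : ContDiff ℝ 1 α := contDiff_snd.comp hu1
  have hf1 : ContDiff ℝ 1 f := (contDiff_complexAct_apply J₀ X).add hφ1
  have ha1 : ContDiff ℝ 1 a := contDiff_const.add hα1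
  set g : ℂ → V := fun w => ρ (w, f w) (a w) with hg
  set γ : ℂ → V := fun w => prolongedTerm J₀ ρ (w, f w) (a w) with hγ
  have hNeq : ∀ w, N w = (g w, γ w) := by
    intro w
    simp only [hN, hHdef, discNonlinearity, hΨu, one_smul]
    rfl
  have hgN : g = fun w => (N w).1 := funext fun w => by rw [hNeq]
  have hγN : γ = fun w => (N w).2 := funext fun w => by rw [hNeq]
  have hg1 : ContDiff ℝ 1 g := by rw [hgN]; exact contDiff_fst.comp hN1
  have hγ1 : ContDiff ℝ 1 γ := by rw [hγN]; exact contDiff_snd.comp hN1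
  have hgs : HasCompactSupport g := by rw [hgN]; exact hNs.comp_left (g := Prod.fst) rfl
  have hγs : HasCompactSupport γ := by rw [hγN]; exact hNs.comp_left (g := Prod.snd) rfl
  have hdφ : ∀ h z, fderiv ℝ φ z h = cauchyTransform J₀ (fun w => fderiv ℝ g w h) z := by
    intro h z
    have hcomp : ∀ {v : ℂ → V × V}, ContDiff ℝ 1 v → ∀ z,
        fderiv ℝ (fun w => (v w).1) z h = (fderiv ℝ v z h).1 := by
      intro v hv z
      rw [fderiv.fst ((hv.differentiable one_ne_zero) z)]
      rfl
    rw [hφ, hcomp hu1, hud, hgN]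
    simp_rw [hcomp hN1]
    exact map_cauchyTransform (J₀.prodMap J₀) J₀ (ContinuousLinearMap.fst ℝ V V) (fun _ => rfl)
      (continuous_fderiv_apply_const hN1 h) (hNs.fderiv_apply ℝ h) z
  have hdα : ∀ h z, fderiv ℝ α z h = cauchyTransform J₀ (fun w => fderiv ℝ γ w h) z := by
    intro h z
    have hcomp : ∀ {v : ℂ → V × V}, ContDiff ℝ 1 v → ∀ z,
        fderiv ℝ (fun w => (v w).2) z h = (fderiv ℝ v z h).2 := by
      intro v hv z
      rw [fderiv.snd ((hv.differentiable one_ne_zero) z)]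
      rfl
    rw [hα, hcomp hu1, hud, hγN]
    simp_rw [hcomp hN1]
    exact map_cauchyTransform (J₀.prodMap J₀) J₀ (ContinuousLinearMap.snd ℝ V V) (fun _ => rfl)
      (continuous_fderiv_apply_const hN1 h) (hNs.fderiv_apply ℝ h) z
  have hαT : ∀ z, α z = cauchyTransform J₀ γ z := by
    intro z
    rw [hα, hγN]
    simp only
    rw [hu z]
    exact map_cauchyTransform (J₀.prodMap J₀) J₀ (ContinuousLinearMap.snd ℝ V V) (fun _ => rfl)
      hN1.continuous hNs z
  have hφW := dbarOp_delOp_of_fderiv_eq_cauchyTransform hJ₀ hg1 hgs hdφ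
  have hαW := dbarOp_delOp_of_fderiv_eq_cauchyTransform hJ₀ hγ1 hγs hdα
  have hacl : ∀ z, HasFDerivAt (fun z => complexAct J₀ z X)
      (Complex.reCLM.smulRight X + Complex.imCLM.smulRight (J₀ X)) z := by
    intro z
    exact (Complex.reCLM.smulRight X +
      Complex.imCLM.smulRight (J₀ X)).hasFDerivAt.congr_of_eventuallyEq
      (Eventually.of_forall fun z => by simp [complexAct_apply])
  have hdf : ∀ z h, fderiv ℝ f z h = h.re • X + h.im • J₀ X + fderiv ℝ φ z h := by
    intro z h
    have : HasFDerivAt f _ z := (hacl z).add ((hφ1.differentiable one_ne_zero) z).hasFDerivAt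
    rw [this.fderiv]
    simp
  set e : ℂ → V := fun z => delOp J₀ φ z - α z with he
  have hfx : ∀ z, fderiv ℝ f z 1 = a z + e z + ρ (z, f z) (a z) := by
    intro z
    rw [hdf, fderiv_one_eq J₀, (hφW z).1]
    simp only [he, ha, hg, Complex.one_re, Complex.one_im]
    module
  have hfy : ∀ z, fderiv ℝ f z Complex.I = J₀ (a z + e z - ρ (z, f z) (a z)) := by
    intro z
    rw [hdf, fderiv_I_eq hJ₀, (hφW z).1]
    simp only [he, ha, hg, Complex.I_re, Complex.I_im, map_sub, map_add]
    module
  have hkey : ∀ w, delOp J₀ g w - γ w = (1 / 2 : ℝ) • (fderiv ℝ ρ (w, f w) (0, e w) (a w) -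
        J₀ (fderiv ℝ ρ (w, f w) (0, J₀ (e w)) (a w))) := by
    intro w
    refine delOp_sub_prolongedTerm ((hρ.differentiable (by simp)) _)
      ((hf1.differentiable one_ne_zero) w) ((ha1.differentiable one_ne_zero) w) (hanti _)
      (isUnit_one_sub_of_norm_le_half (hhalf _)) (hfx w) (hfy w) ?_
    have : dbarOp J₀ a w = dbarOp J₀ α w := by
      simp only [dbarOp, ha, fderiv_const_add]
    rw [this, (hαW w).1]
  have hkc : Continuous fun w => delOp J₀ g w - γ w := (continuous_delOp J₀ hg1).sub hγ1.continuous
  have hkz : ∀ w, 2 < ‖w‖ → delOp J₀ g w - γ w = 0 := by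
    intro w hw
    rw [hkey, fderiv_eq_zero_of_norm_gt hρs hw]
    simp
  have hdgs : HasCompactSupport (delOp J₀ g) := by
    refine hasCompactSupport_of_norm_gt (c := 0) (r := 2) fun w hw => ?_
    have h1 := hkz w (by simpa using hw)
    have h2 : γ w = 0 := by rw [hγN]; simp only; rw [hNz w (by simpa using hw)]; rfl
    rwa [h2, sub_zero] at h1
  have heT : ∀ z, e z = cauchyTransform J₀ (fun w => delOp J₀ g w - γ w) z := by
    intro z
    rw [cauchyTransform_sub J₀ (continuous_delOp J₀ hg1) hdgs hγ1.continuous hγs, ← hαT,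
      ← (hφW z).2]
  have he0 : ∀ z, e z = 0 := by
    intro z
    have := norm_le_of_norm_le_add_half (d := e) (A := 0) ?_ ?_ z
    · simpa using this
    · obtain ⟨M, hM⟩ := (hasCompactSupport_of_norm_gt (c := 0) (r := 2)
        (fun w hw => hkz w (by simpa using hw))).exists_bound_of_continuous hkc
      refine ⟨C' * M, fun z => ?_⟩
      rw [heT]
      refine hC' _ hkc 0 M hM (fun w hw => hkz w ?_) z
      rw [sub_zero] at hw
      linarith
    · intro B hB z
      have hB0 : 0 ≤ B := (norm_nonneg _).trans (hB 0)
      rw [heT, zero_add]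
      refine (hC' _ hkc 0 (κ * (1 + ‖J₀‖ * ‖J₀‖) * (‖X‖ + 1) * (B / 2)) (fun w => ?_)
        (fun w hw => hkz w ?_) z).trans ?_
      · rw [hkey, norm_smul]
        have haw : ‖a w‖ ≤ ‖X‖ + 1 := by
          refine (norm_add_le _ _).trans ?_
          gcongr
          exact (norm_snd_le (u w)).trans ((hub w).trans (by linarith))
        have h1 : ‖fderiv ℝ ρ (w, f w) (0, e w) (a w)‖ ≤ κ * B * (‖X‖ + 1) := by
          refine (hκ _ _ _).trans ?_
          gcongr
          exact hB w
        have h2 : ‖J₀ (fderiv ℝ ρ (w, f w) (0, J₀ (e w)) (a w))‖ ≤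
            ‖J₀‖ * (κ * (‖J₀‖ * B) * (‖X‖ + 1)) := by
          refine (J₀.le_opNorm _).trans ?_
          gcongr
          refine (hκ _ _ _).trans ?_
          gcongr
          exact (J₀.le_opNorm _).trans (by gcongr; exact hB w)
        have h3 := (norm_sub_le (fderiv ℝ ρ (w, f w) (0, e w) (a w))
          (J₀ (fderiv ℝ ρ (w, f w) (0, J₀ (e w)) (a w)))).trans (add_le_add h1 h2)
        rw [Real.norm_of_nonneg (by norm_num)]
        refine (mul_le_mul_of_nonneg_left h3 (by norm_num)).trans (le_of_eq ?_)
        ring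
      · rw [sub_zero] at hw
        linarith
      · rw [← mul_assoc]
        exact (mul_le_mul_of_nonneg_right hsmall (by positivity)).trans (by rw [one_mul])
  have hfx' : ∀ z, fderiv ℝ f z 1 = a z + g z := fun z => by rw [hfx, he0, add_zero]
  have hfy' : ∀ z, fderiv ℝ f z Complex.I = J₀ (a z - g z) := fun z => by
    rw [hfy, he0, add_zero]
  have hf2 : ContDiff ℝ 2 f := by
    rw [show (2 : WithTop ℕ∞) = 1 + 1 from one_add_one_eq_two.symm, contDiff_succ_iff_fderiv_apply]
    refine ⟨hf1.differentiable one_ne_zero, by simp, fun h => ?_⟩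
    have : (fun z => fderiv ℝ f z h) = fun z => h.re • (a z + g z) + h.im • J₀ (a z - g z) := by
      ext z
      rw [fderiv_apply_eq_re_im, hfx', hfy']
    rw [this]
    exact ((ha1.add hg1).const_smul _).add ((J₀.contDiff.comp (ha1.sub hg1)).const_smul _)
  have hφ2 : ContDiff ℝ 2 φ := by
    have : φ = fun z => f z - complexAct J₀ z X := by
      ext z
      simp [hf]
    rw [this]
    exact hf2.sub (contDiff_complexAct_apply J₀ X)
  exact ⟨φ, α, hφ2, fun z => (norm_fst_le _).trans (hub z), fun z => (norm_snd_le _).trans (hub z),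
    fun z => ⟨hfx' z, hfy' z⟩⟩

end DiscExistence

section SmallDiscs

/-- A smooth family vanishing at parameter `0` and supported in a fixed compact set is `C¹`-small
for small parameters. -/
lemma eventually_norm_le_and_norm_fderiv_le {W W' : Type*} [NormedAddCommGroup W]
    [NormedSpace ℝ W] [NormedAddCommGroup W'] [NormedSpace ℝ W'] {F : ℝ → W → W'}
    (hF : ContDiff ℝ 2 (Function.uncurry F)) (hF0 : ∀ q, F 0 q = 0) {K : Set W} (hK : IsCompact K)
    (hFK : ∀ t, ∀ q ∉ K, F t q = 0) {δ : ℝ} (hδ : 0 < δ) :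
    ∀ᶠ t in 𝓝 (0 : ℝ), ∀ q, ‖F t q‖ ≤ δ ∧ ‖fderiv ℝ (F t) q‖ ≤ δ := by
  have hd : Continuous fun x : ℝ × W => fderiv ℝ (F x.1) x.2 := by
    have : ContDiff ℝ 1 fun x : ℝ × W => fderiv ℝ (F x.1) x.2 := by
      refine ContDiff.fderiv (f := fun x : ℝ × W => F x.1) (m := 2) ?_ contDiff_snd
        one_add_one_eq_two.le
      exact hF.comp (ContDiff.prodMk (by fun_prop) (by fun_prop) :
        ContDiff ℝ 2 fun r : (ℝ × W) × W => (r.1.1, r.2))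
    exact this.continuous
  have hmain : ∀ᶠ t in 𝓝 (0 : ℝ), ∀ q ∈ K, ‖F t q‖ ≤ δ ∧ ‖fderiv ℝ (F t) q‖ ≤ δ := by
    refine hK.eventually_forall_of_forall_eventually fun q _ => ?_
    have h0 : F 0 = fun _ => 0 := funext hF0
    have h1 : ∀ᶠ x : ℝ × W in 𝓝 (0, q), ‖F x.1 x.2‖ < δ := by
      refine (hF.continuous.norm.tendsto' (0, q) 0 ?_).eventually_lt_const hδ
      simp [Function.uncurry, hF0]
    have h2 : ∀ᶠ x : ℝ × W in 𝓝 (0, q), ‖fderiv ℝ (F x.1) x.2‖ < δ := by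
      refine (hd.norm.tendsto' (0, q) 0 ?_).eventually_lt_const hδ
      simp [h0]
    filter_upwards [h1, h2] with x hx1 hx2 using ⟨hx1.le, hx2.le⟩
  filter_upwards [hmain] with t ht q
  by_cases hq : q ∈ K
  · exact ht q hq
  · have hev : F t =ᶠ[𝓝 q] fun _ => 0 := by
      filter_upwards [hK.isClosed.isOpen_compl.mem_nhds hq] with y hy using hFK t y hy
    rw [hev.fderiv_eq, hFK t q hq]
    simp [hδ.le]

variable {V : Type*} [NormedAddCommGroup V] [NormedSpace ℝ V]

lemma exists_disc_of_beltrami [FiniteDimensional ℝ V] {J₀ : V →L[ℝ] V}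
    (hJ₀ : ∀ v, J₀ (J₀ v) = -v) {R : V → V →L[ℝ] V} (hR : ContDiff ℝ (⊤ : ℕ∞) R)
    (hhalf : ∀ y, ‖R y‖ ≤ 1 / 2) (hanti : ∀ y v, J₀ (R y v) = -R y (J₀ v)) {κ : ℝ}
    (hκ : ∀ y, ‖fderiv ℝ R y‖ ≤ κ) {p : V} (hp : R p = 0) (X : V) {ε : ℝ} (hε : 0 < ε) :
    ∃ t, 0 < t ∧ t < ε ∧ ∃ f : ℂ → V, ContDiff ℝ 2 f ∧
      (∀ z ∈ ball (0 : ℂ) 1, ‖f z‖ ≤ (1 + ‖J₀‖) * ‖X‖ + 1) ∧ ‖fderiv ℝ f 0 1 - X‖ ≤ ε ∧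
      ∀ z ∈ ball (0 : ℂ) 1, ∃ b, fderiv ℝ f z 1 = b + R (p + t • f z) b ∧
        fderiv ℝ f z Complex.I = J₀ (b - R (p + t • f z) b) := by
  have : CompleteSpace V := FiniteDimensional.complete ℝ V
  have hκ0 : 0 ≤ κ := (norm_nonneg (fderiv ℝ R 0)).trans (hκ 0)
  obtain ⟨C, hC0, hC⟩ := exists_norm_cauchyTransform_le (J₀.prodMap J₀)
  obtain ⟨C', -, hC'⟩ := exists_norm_cauchyTransform_le J₀
  let χ : ContDiffBump (0 : ℂ) := ⟨1, 2, one_pos, one_lt_two⟩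
  let Ψ : ContDiffBump (0 : V × V) := ⟨1, 2, one_pos, one_lt_two⟩
  have hχ : ContDiff ℝ (⊤ : ℕ∞) χ := χ.contDiff
  have hΨ : ContDiff ℝ (⊤ : ℕ∞) Ψ := Ψ.contDiff
  let ρ : ℝ → ℂ × V → V →L[ℝ] V := fun t q => χ q.1 • R (p + t • q.2)
  have hρ : ContDiff ℝ (⊤ : ℕ∞) (Function.uncurry ρ) := by
    refine ContDiff.smul (hχ.comp (by fun_prop)) (hR.comp ?_)
    fun_prop
  have hρt : ∀ t, ContDiff ℝ (⊤ : ℕ∞) (ρ t) := fun t =>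
    hρ.comp (contDiff_const.prodMk contDiff_id)
  have hρhalf : ∀ t q, ‖ρ t q‖ ≤ 1 / 2 := by
    intro t q
    rw [norm_smul, Real.norm_of_nonneg χ.nonneg]
    exact (mul_le_mul χ.le_one (hhalf _) (norm_nonneg _) zero_le_one).trans (by norm_num)
  have hρs : ∀ t q, 2 < ‖q.1‖ → ρ t q = 0 := by
    intro t q hq
    have : χ q.1 = 0 := χ.zero_of_le_dist (by rw [dist_zero_right]; exact hq.le)
    simp [ρ, this]
  have hρanti : ∀ t q v, J₀ (ρ t q v) = -ρ t q (J₀ v) := by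
    intro t q v
    simp only [ρ, _root_.smul_apply, map_smul, hanti, smul_neg]
  have hρd : ∀ t, 0 ≤ t → ∀ q v a, ‖fderiv ℝ (ρ t) q (0, v) a‖ ≤ t * κ * ‖v‖ * ‖a‖ := by
    intro t ht q v a
    have h1 : HasFDerivAt (fun v : V => ((q.1, q.2 + v) : ℂ × V))
        (ContinuousLinearMap.inr ℝ ℂ V) 0 := by
      have := (hasFDerivAt_const (𝕜 := ℝ) q.1 (0 : V)).prodMk
        ((hasFDerivAt_id (𝕜 := ℝ) (0 : V)).const_add q.2)
      exact this
    have h2 : HasFDerivAt (ρ t) (fderiv ℝ (ρ t) q) ((fun v : V => ((q.1, q.2 + v) : ℂ × V)) 0) := by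
      simp only [add_zero]
      exact ((hρt t).differentiable (by simp) q).hasFDerivAt
    have h3 := h2.comp (0 : V) h1
    have h4 : HasFDerivAt (fun v : V => p + t • (q.2 + v)) (t • ContinuousLinearMap.id ℝ V) 0 :=
      (((hasFDerivAt_id (𝕜 := ℝ) (0 : V)).const_add q.2).const_smul t).const_add p
    have h5 : HasFDerivAt R (fderiv ℝ R (p + t • (q.2 + 0))) (p + t • (q.2 + 0)) :=
      (hR.differentiable (by simp) _).hasFDerivAt
    have h6 := (h5.comp (0 : V) h4).const_smul (χ q.1)
    have h7 := DFunLike.congr_fun (h3.unique h6) v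
    have h8 : fderiv ℝ (ρ t) q (0, v) = χ q.1 • fderiv ℝ R (p + t • (q.2 + 0)) (t • v) := h7
    rw [h8]
    refine (ContinuousLinearMap.le_opNorm _ _).trans ?_
    gcongr
    rw [norm_smul, Real.norm_of_nonneg χ.nonneg]
    refine (mul_le_mul χ.le_one (ContinuousLinearMap.le_of_opNorm_le _ (hκ _) _)
      (norm_nonneg _) zero_le_one).trans (le_of_eq ?_)
    rw [norm_smul, Real.norm_of_nonneg ht]
    ring
  set δ := min (1 / (2 * C)) (ε / (2 * C)) with hδ
  have hδ0 : 0 < δ := by positivity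
  have hCδ1 : C * δ ≤ 1 / 2 := by
    calc C * δ ≤ C * (1 / (2 * C)) := by gcongr; exact min_le_left _ _
      _ = 1 / 2 := by field_simp
  have hCδε : C * δ ≤ ε / 2 := by
    calc C * δ ≤ C * (ε / (2 * C)) := by gcongr; exact min_le_right _ _
      _ = ε / 2 := by field_simp
  have hρ0 : ρ 0 = fun _ => 0 := by
    ext1 q
    simp [ρ, hp]
  have hH := eventually_norm_le_and_norm_fderiv_le
    (F := fun t => discNonlinearity J₀ Ψ X (ρ t))
    ((contDiff_discNonlinearity hΨ hρ hρhalf).of_le (WithTop.coe_le_coe.2 (le_top : (2 : ℕ∞) ≤ ⊤)))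
    (fun q => by
      unfold discNonlinearity
      rw [prolongedTerm_eq_zero (by rw [hρ0]; simp), hρ0]
      simp)
    ((isCompact_closedBall (0 : ℂ) 2).prod Ψ.hasCompactSupport.isCompact)
    (fun t q hq => by
      by_cases h : 2 < ‖q.1‖
      · exact discNonlinearity_eq_zero (hρs t) h
      · have h2 : Ψ q.2 = 0 := by
          by_contra hne
          exact hq ⟨by simpa using h, subset_tsupport _ hne⟩
        rw [discNonlinearity, h2, zero_smul]) hδ0
  have hsmall1 : ∀ᶠ t in 𝓝 (0 : ℝ), C' * (t * κ * (1 + ‖J₀‖ * ‖J₀‖) * (‖X‖ + 1)) < 1 := by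
    refine (Continuous.tendsto' (by fun_prop) 0 0 (by simp)).eventually_lt_const one_pos
  have hsmall2 : ∀ᶠ t in 𝓝 (0 : ℝ), κ * t * (‖X‖ + 1) < ε / 2 := by
    refine (Continuous.tendsto' (by fun_prop) 0 0 (by simp)).eventually_lt_const (by positivity)
  obtain ⟨t, ⟨⟨hHt, ht1⟩, ht2⟩, ht0, htε⟩ :=
    ((((hH.and hsmall1).and hsmall2).filter_mono nhdsWithin_le_nhds).and
      (Ioo_mem_nhdsGT hε)).exists
  obtain ⟨φ, α, hφ2, hφ, hα, heq⟩ := exists_disc_of_small hJ₀ (hρt t) (hρs t) (hρhalf t)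
    (hρanti t) hΨ Ψ.hasCompactSupport
    (fun v hv => Ψ.one_of_mem_closedBall (by simpa using hv)) X hC hCδ1
    (fun q => (hHt q).1) (fun q => (hHt q).2) hC' (mul_nonneg ht0.le hκ0) (hρd t ht0.le) ht1.le
  have hχ1 : ∀ z ∈ ball (0 : ℂ) 1, χ z = 1 := fun z hz =>
    χ.one_of_mem_closedBall (ball_subset_closedBall hz)
  refine ⟨t, ht0, htε, fun z => complexAct J₀ z X + φ z,
    (contDiff_complexAct_apply J₀ X).add hφ2, fun z hz => ?_, ?_, fun z hz => ?_⟩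
  · refine (norm_add_le _ _).trans (add_le_add ?_ ((hφ z).trans (by linarith)))
    refine (norm_complexAct_apply_le J₀ z X).trans ?_
    gcongr
    have : ‖z‖ ≤ 1 := by simpa using (ball_subset_closedBall hz)
    exact mul_le_of_le_one_right (by positivity) this
  · have h1 : ρ t (0, complexAct J₀ 0 X + φ 0) = R (p + t • φ 0) := by
      simp only [ρ, hχ1 0 (mem_ball_self one_pos), one_smul, complexAct_apply]
      simp
    rw [(heq 0).1, h1]
    have h2 : ‖R (p + t • φ 0)‖ ≤ κ * t := by
      have := convex_univ.norm_image_sub_le_of_norm_fderiv_le (𝕜 := ℝ) (f := R) (C := κ)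
        (fun x _ => (hR.differentiable (by simp)) x) (fun x _ => hκ x)
        (mem_univ p) (mem_univ (p + t • φ 0))
      rw [hp, sub_zero, add_sub_cancel_left, norm_smul, Real.norm_of_nonneg ht0.le] at this
      refine this.trans ?_
      gcongr
      exact mul_le_of_le_one_right ht0.le ((hφ 0).trans (by linarith))
    have h3 : ‖R (p + t • φ 0) (X + α 0)‖ ≤ κ * t * (‖X‖ + 1) := by
      refine (ContinuousLinearMap.le_of_opNorm_le _ h2 _).trans ?_
      gcongr
      exact (norm_add_le _ _).trans (by gcongr; exact (hα 0).trans (by linarith))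
    rw [add_assoc, add_sub_cancel_left]
    exact (norm_add_le _ _).trans (by linarith [hα 0])
  · refine ⟨X + α z, ?_⟩
    have h1 : ρ t (z, complexAct J₀ z X + φ z) = R (p + t • (complexAct J₀ z X + φ z)) := by
      simp only [ρ, hχ1 z hz, one_smul]
    rw [← h1]
    exact heq z

end SmallDiscs

section BeltramiCoefficient

lemma mul_beltrami_eq_neg {A : Type*} [Ring A] {j k : A} (hj : j * j = -1) (hk : k * k = -1)
    (hu : IsUnit (j + k)) :
    k * ((j - k) * Ring.inverse (j + k)) = -((j - k) * Ring.inverse (j + k) * k) := by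
  have h1 : k * (j - k) = -((j - k) * j) := by
    rw [mul_sub, sub_mul, hj, hk]; abel
  have h2 : k * (j + k) = (j + k) * j := by
    rw [mul_add, add_mul, hj, hk]; abel
  have h3 : Ring.inverse (j + k) * k = j * Ring.inverse (j + k) := by
    calc Ring.inverse (j + k) * k
        = Ring.inverse (j + k) * (k * (j + k)) * Ring.inverse (j + k) := by
          rw [mul_assoc, mul_assoc, Ring.mul_inverse_cancel _ hu, mul_one]
      _ = j * Ring.inverse (j + k) := by
          rw [h2, ← mul_assoc, Ring.inverse_mul_cancel _ hu, one_mul]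
  rw [← mul_assoc, h1, mul_assoc, h3]
  noncomm_ring

lemma mul_one_sub_beltrami {A : Type*} [Ring A] {j k : A} (hj : j * j = -1) (hk : k * k = -1)
    (hu : IsUnit (j + k)) :
    k * (1 - (j - k) * Ring.inverse (j + k)) = j * (1 + (j - k) * Ring.inverse (j + k)) := by
  have h1 : (j + k) * (j - k) = -((j - k) * (j + k)) := by
    simp only [mul_sub, sub_mul, mul_add, add_mul, hj, hk]; abel
  have h2 : (j + k) * ((j - k) * Ring.inverse (j + k)) = -(j - k) := by
    rw [← mul_assoc, h1, neg_mul, mul_assoc, Ring.mul_inverse_cancel _ hu, mul_one]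
  rw [add_mul] at h2
  rw [mul_sub, mul_add, mul_one, mul_one, sub_eq_iff_eq_add, add_assoc, h2]
  abel

variable {V : Type*} [NormedAddCommGroup V] [NormedSpace ℝ V]

lemma beltrami_apply_eq_neg {j k : V →L[ℝ] V} (hj : j * j = -1) (hk : k * k = -1)
    (hu : IsUnit (j + k)) (v : V) :
    k (((j - k) * Ring.inverse (j + k)) v) = -((j - k) * Ring.inverse (j + k)) (k v) :=
  DFunLike.congr_fun (mul_beltrami_eq_neg hj hk hu) v

lemma apply_sub_beltrami_apply {j k : V →L[ℝ] V} (hj : j * j = -1) (hk : k * k = -1)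
    (hu : IsUnit (j + k)) (v : V) :
    k (v - ((j - k) * Ring.inverse (j + k)) v) = j (v + ((j - k) * Ring.inverse (j + k)) v) :=
  DFunLike.congr_fun (mul_one_sub_beltrami hj hk hu) v

lemma exists_fderiv_bound_of_hasCompactSupport {G : Type*} [NormedAddCommGroup G]
    [NormedSpace ℝ G] {f : V → G} (hf : ContDiff ℝ (⊤ : ℕ∞) f) (hc : HasCompactSupport f) :
    ∃ κ, ∀ y, ‖fderiv ℝ f y‖ ≤ κ := by
  have h1 : Continuous (fderiv ℝ f) := hf.continuous_fderiv (by simp)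
  have h2 : HasCompactSupport (fderiv ℝ f) := hc.fderiv ℝ
  obtain ⟨κ, hκ⟩ := h2.exists_bound_of_continuous h1
  exact ⟨κ, hκ⟩

lemma exists_beltramiCoefficient [FiniteDimensional ℝ V] {Ω : Set V} (hΩ : IsOpen Ω)
    {J : V → V →L[ℝ] V} (hJ : ContDiffOn ℝ (⊤ : ℕ∞) J Ω) (hJ2 : ∀ x ∈ Ω, J x * J x = -1)
    {p : V} (hp : p ∈ Ω) :
    ∃ R : V → V →L[ℝ] V, ContDiff ℝ (⊤ : ℕ∞) R ∧ (∀ y, ‖R y‖ ≤ 1 / 2) ∧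
      (∀ y v, J p (R y v) = -R y (J p v)) ∧ (∃ κ, ∀ y, ‖fderiv ℝ R y‖ ≤ κ) ∧ R p = 0 ∧
      ∃ r > 0, ball p r ⊆ Ω ∧ ∀ y ∈ ball p r, ∀ b, J p (b - R y b) = J y (b + R y b) := by
  have : CompleteSpace V := FiniteDimensional.complete ℝ V
  have hpp := hJ2 p hp
  have hunit : IsUnit (J p + J p) := by
    have h1 : (J p + J p) * ((-(1 / 4) : ℝ) • (J p + J p)) = 1 := by
      rw [mul_smul_comm, add_mul, mul_add, hpp]
      module
    have h2 : ((-(1 / 4) : ℝ) • (J p + J p)) * (J p + J p) = 1 := by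
      rw [smul_mul_assoc, add_mul, mul_add, hpp]
      module
    exact ⟨⟨_, _, h1, h2⟩, rfl⟩
  obtain ⟨Q, hQdef⟩ : ∃ Q : V → V →L[ℝ] V,
      ∀ y, Q y = (J y - J p) * Ring.inverse (J y + J p) := ⟨_, fun _ => rfl⟩
  have hJc : ContinuousAt J p := (hJ.continuousOn).continuousAt (hΩ.mem_nhds hp)
  have hu : ∀ᶠ y in 𝓝 p, IsUnit (J y + J p) :=
    (hJc.add continuousAt_const).eventually (Units.isOpen.mem_nhds hunit)
  have hQd : ∀ y ∈ Ω, IsUnit (J y + J p) → ContDiffAt ℝ (⊤ : ℕ∞) Q y := by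
    intro y hy hyu
    have hJy : ContDiffAt ℝ (⊤ : ℕ∞) J y := hJ.contDiffAt (hΩ.mem_nhds hy)
    obtain ⟨U, hU⟩ := hyu
    have h1 := contDiffAt_ringInverse ℝ U (n := (⊤ : ℕ∞))
    rw [hU] at h1
    have h2 : ContDiffAt ℝ (⊤ : ℕ∞) (fun y => Ring.inverse (J y + J p)) y :=
      ContDiffAt.comp (f := fun y => J y + J p) y h1 (hJy.add contDiffAt_const)
    rw [funext hQdef]
    exact (hJy.sub contDiffAt_const).clm_comp h2
  have hQp : Q p = 0 := by simp [hQdef]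
  have hQ : ∀ᶠ y in 𝓝 p, ‖Q y‖ < 1 / 2 := by
    have h1 := (hQd p hp hunit).continuousAt.norm
    refine (h1.tendsto).eventually_lt_const ?_
    rw [hQp, norm_zero]
    norm_num
  obtain ⟨s, hs, hball⟩ := Metric.eventually_nhds_iff_ball.mp
    ((hu.and hQ).and (hΩ.mem_nhds hp))
  let η : ContDiffBump p := ⟨s / 3, s / 2, by positivity, by linarith⟩
  have hη : ContDiff ℝ (⊤ : ℕ∞) η := η.contDiff
  have hsub : ∀ y, η y ≠ 0 → y ∈ ball p s := by
    intro y hy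
    have : y ∈ ball p (s / 2) := by
      rw [show ball p (s / 2) = Function.support η from η.support_eq.symm]
      exact hy
    exact ball_subset_ball (by linarith) this
  have hRs : ContDiff ℝ (⊤ : ℕ∞) fun y => η y • Q y := by
    refine contDiff_iff_contDiffAt.mpr fun y => ?_
    by_cases hy : y ∈ tsupport η
    · have hy' : y ∈ ball p s := by
        rw [η.tsupport_eq] at hy
        exact closedBall_subset_ball (show s / 2 < s by linarith) hy
      exact hη.contDiffAt.smul (hQd y (hball y hy').2 (hball y hy').1.1)
    · refine (contDiffAt_const (c := (0 : V →L[ℝ] V))).congr_of_eventuallyEq ?_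
      filter_upwards [notMem_tsupport_iff_eventuallyEq.mp hy] with w hw
      simp [hw]
  have hRc : HasCompactSupport fun y => η y • Q y := η.hasCompactSupport.smul_right
  refine ⟨fun y => η y • Q y, hRs, fun y => ?_, fun y v => ?_, ?_, by simp [hQp], s / 3,
    by positivity, fun y hy => (hball y (ball_subset_ball (by linarith) hy)).2, fun y hy b => ?_⟩
  · by_cases h : η y = 0
    · simp [h]
    · rw [norm_smul, Real.norm_of_nonneg η.nonneg]
      exact (mul_le_mul η.le_one (hball y (hsub y h)).1.2.le (norm_nonneg _) zero_le_one).trans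
        (by norm_num)
  · by_cases h : η y = 0
    · simp [h]
    · have hy := hball y (hsub y h)
      have h2 : J p (Q y v) = -Q y (J p v) := by
        rw [hQdef]
        exact beltrami_apply_eq_neg (hJ2 y hy.2) hpp hy.1.1 v
      simp only [_root_.smul_apply, map_smul, h2, smul_neg]
  · exact exists_fderiv_bound_of_hasCompactSupport hRs hRc
  · have hη1 : η y = 1 := η.one_of_mem_closedBall (ball_subset_closedBall hy)
    have hyb := hball y (ball_subset_ball (by linarith) hy)
    simp only [hη1, one_smul]
    rw [hQdef]
    exact apply_sub_beltrami_apply (hJ2 y hyb.2) hpp hyb.1.1 b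

lemma exists_small_disc [FiniteDimensional ℝ V] {Ω : Set V} (hΩ : IsOpen Ω)
    {J : V → V →L[ℝ] V} (hJ : ContDiffOn ℝ (⊤ : ℕ∞) J Ω) (hJ2 : ∀ x ∈ Ω, J x * J x = -1)
    {p : V} (hp : p ∈ Ω) (X : V) {ε : ℝ} (hε : 0 < ε) :
    ∃ F : ℂ → V, ContDiff ℝ 2 F ∧ MapsTo F (ball 0 1) Ω ∧
      (∀ z ∈ ball (0 : ℂ) 1, fderiv ℝ F z Complex.I = J (F z) (fderiv ℝ F z 1)) ∧
      ‖F 0 - p‖ < ε ∧ ∃ t > 0, ∃ Y, fderiv ℝ F 0 1 = (t : ℝ) • Y ∧ ‖Y - X‖ < ε := by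
  obtain ⟨R, hR, hhalf, hanti, ⟨κ, hκ⟩, hRp, r, hr, hrΩ, hRJ⟩ :=
    exists_beltramiCoefficient hΩ hJ hJ2 hp
  set K := (1 + ‖J p‖) * ‖X‖ + 1 with hK
  have hK0 : 0 < K := by positivity
  obtain ⟨t, ht0, htε, f, hf, hfK, hfX, hfb⟩ := exists_disc_of_beltrami
    (fun v => DFunLike.congr_fun (hJ2 p hp) v) hR hhalf hanti hκ hRp X
    (ε := min (ε / 2) (min (r / K) (ε / K))) (by positivity)
  have htr : t * K < r := (lt_div_iff₀ hK0).mp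
    (htε.trans_le ((min_le_right _ _).trans (min_le_left _ _)))
  have htε' : t * K < ε := (lt_div_iff₀ hK0).mp
    (htε.trans_le ((min_le_right _ _).trans (min_le_right _ _)))
  have hdist : ∀ z ∈ ball (0 : ℂ) 1, ‖p + t • f z - p‖ ≤ t * K := by
    intro z hz
    rw [add_sub_cancel_left, norm_smul, Real.norm_of_nonneg ht0.le]
    exact mul_le_mul_of_nonneg_left (hfK z hz) ht0.le
  have hmem : ∀ z ∈ ball (0 : ℂ) 1, p + t • f z ∈ ball p r := by
    intro z hz
    rw [mem_ball, dist_eq_norm]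
    exact (hdist z hz).trans_lt htr
  have hd : ∀ z h, fderiv ℝ (fun z => p + t • f z) z h = t • fderiv ℝ f z h := by
    intro z h
    have h1 : HasFDerivAt (fun z => p + t • f z) _ z :=
      (((hf.differentiable two_ne_zero) z).hasFDerivAt.const_smul t).const_add p
    rw [h1.fderiv]
    rfl
  refine ⟨fun z => p + t • f z, contDiff_const.add (hf.const_smul t),
    fun z hz => hrΩ (hmem z hz), fun z hz => ?_,
    (hdist 0 (mem_ball_self one_pos)).trans_lt htε', t, ht0, fderiv ℝ f 0 1, hd 0 1, ?_⟩
  · obtain ⟨b, hb1, hb2⟩ := hfb z hz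
    rw [hd, hd, map_smul, hb1, hb2, hRJ _ (hmem z hz)]
  · exact (hfX.trans (min_le_left _ _)).trans_lt (by linarith)

end BeltramiCoefficient

section LeviForm

variable {V : Type*} [NormedAddCommGroup V] [NormedSpace ℂ V]

lemma leviForm_smul (J : V → V →L[ℝ] V) (u : V → ℝ) (x X : V) (t : ℝ) :
    leviForm J u x (t • X) = t ^ 2 * leviForm J u x X := by
  simp only [leviForm, map_smul, _root_.smul_apply, smul_eq_mul]
  ring

lemma contDiffOn_fderiv_comp {Ω : Set V} (hΩ : IsOpen Ω) {J : V → V →L[ℝ] V}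
    (hJ : ContDiffOn ℝ (⊤ : ℕ∞) J Ω) {u : V → ℝ} (hu : ContDiffOn ℝ 2 u Ω) :
    ContDiffOn ℝ 1 (fun y => (fderiv ℝ u y).comp (J y)) Ω :=
  (hu.fderiv_of_isOpen hΩ one_add_one_eq_two.le).clm_comp
    (hJ.of_le (WithTop.coe_le_coe.2 (le_top : (1 : ℕ∞) ≤ ⊤)))

lemma continuousAt_leviForm {Ω : Set V} (hΩ : IsOpen Ω) {J : V → V →L[ℝ] V}
    (hJ : ContDiffOn ℝ (⊤ : ℕ∞) J Ω) {u : V → ℝ} (hu : ContDiffOn ℝ 2 u Ω) {p : V} (hp : p ∈ Ω)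
    (X : V) : ContinuousAt (fun q : V × V => leviForm J u q.1 q.2) (p, X) := by
  have h1 : ContinuousAt (fun q : V × V =>
      fderiv ℝ (fun y => (fderiv ℝ u y).comp (J y)) q.1) (p, X) := by
    have : ContinuousAt (fderiv ℝ (fun y => (fderiv ℝ u y).comp (J y))) p :=
      ((contDiffOn_fderiv_comp hΩ hJ hu).continuousOn_fderiv_of_isOpen hΩ le_rfl).continuousAt
        (hΩ.mem_nhds hp)
    exact ContinuousAt.comp (f := Prod.fst) this continuousAt_fst
  have h2 : ContinuousAt (fun q : V × V => J q.1 q.2) (p, X) := by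
    have : ContinuousAt J p := hJ.continuousOn.continuousAt (hΩ.mem_nhds hp)
    exact (ContinuousAt.comp (f := Prod.fst) this continuousAt_fst).clm_apply continuousAt_snd
  unfold leviForm
  exact (((h1.clm_apply continuousAt_snd).clm_apply h2).sub
    ((h1.clm_apply h2).clm_apply continuousAt_snd)).neg

/-- Along a `J`-holomorphic disc `f`, the Laplacian of `u ∘ f` is the Levi form of `u` in the
direction `∂f/∂x`. -/
lemma lapR_comp_eq_leviForm {Ω : Set V} (hΩ : IsOpen Ω) {J : V → V →L[ℝ] V}
    (hJ : ContDiffOn ℝ (⊤ : ℕ∞) J Ω) (hJ2 : ∀ x ∈ Ω, ∀ v, J x (J x v) = -v) {u : V → ℝ}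
    (hu : ContDiffOn ℝ 2 u Ω) {f : ℂ → V} {D : Set ℂ} (hD : IsOpen D) (hf : ContDiffOn ℝ 2 f D)
    (hfΩ : MapsTo f D Ω)
    (hfJ : ∀ z ∈ D, fderiv ℝ f z Complex.I = J (f z) (fderiv ℝ f z 1)) {ζ : ℂ} (hζ : ζ ∈ D) :
    lapR (fun w => u (f w)) ζ = leviForm J u (f ζ) (fderiv ℝ f ζ 1) := by
  set ω : V → V →L[ℝ] ℝ := fun y => (fderiv ℝ u y).comp (J y) with hω
  have hfd : ∀ z ∈ D, HasFDerivAt f (fderiv ℝ f z) z := fun z hz =>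
    ((hf.contDiffAt (hD.mem_nhds hz)).differentiableAt two_ne_zero).hasFDerivAt
  have hud : ∀ z ∈ D, ∀ h, fderiv ℝ (fun w => u (f w)) z h =
      fderiv ℝ u (f z) (fderiv ℝ f z h) := by
    intro z hz h
    have h1 := ((hu.contDiffAt (hΩ.mem_nhds (hfΩ hz))).differentiableAt
      two_ne_zero).hasFDerivAt.comp z (hfd z hz)
    exact DFunLike.congr_fun h1.fderiv h
  have hx : (fun w => fderiv ℝ (fun w => u (f w)) w 1) =ᶠ[𝓝 ζ]
      fun w => -(ω (f w) (fderiv ℝ f w Complex.I)) := by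
    filter_upwards [hD.mem_nhds hζ] with w hw
    rw [hud w hw, hfJ w hw]
    simp [hω, hJ2 _ (hfΩ hw)]
  have hy : (fun w => fderiv ℝ (fun w => u (f w)) w Complex.I) =ᶠ[𝓝 ζ]
      fun w => ω (f w) (fderiv ℝ f w 1) := by
    filter_upwards [hD.mem_nhds hζ] with w hw
    rw [hud w hw, hfJ w hw]
    rfl
  have hωd : HasFDerivAt ω (fderiv ℝ ω (f ζ)) (f ζ) :=
    (((contDiffOn_fderiv_comp hΩ hJ hu).contDiffAt (hΩ.mem_nhds (hfΩ hζ))).differentiableAt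
      one_ne_zero).hasFDerivAt
  have hωf : HasFDerivAt (fun w => ω (f w)) _ ζ := hωd.comp ζ (hfd ζ hζ)
  have hf2 : HasFDerivAt (fderiv ℝ f) (fderiv ℝ (fderiv ℝ f) ζ) ζ :=
    (((hf.fderiv_of_isOpen hD one_add_one_eq_two.le).contDiffAt (hD.mem_nhds hζ)).differentiableAt
      one_ne_zero).hasFDerivAt
  have hsymm : fderiv ℝ (fderiv ℝ f) ζ 1 Complex.I = fderiv ℝ (fderiv ℝ f) ζ Complex.I 1 :=
    ((hf.contDiffAt (hD.mem_nhds hζ)).isSymmSndFDerivAt (by simp)).eq 1 Complex.I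
  have hprod : ∀ h k, fderiv ℝ (fun w => ω (f w) (fderiv ℝ f w h)) ζ k =
      fderiv ℝ ω (f ζ) (fderiv ℝ f ζ k) (fderiv ℝ f ζ h) +
        ω (f ζ) (fderiv ℝ (fderiv ℝ f) ζ k h) := by
    intro h k
    have h1 := hωf.clm_apply (hf2.clm_apply (hasFDerivAt_const h ζ))
    rw [h1.fderiv]
    simp [add_comm]
  unfold lapR
  rw [hx.fderiv_eq, hy.fderiv_eq, fderiv_fun_neg, neg_apply, hprod, hprod, hsymm, hfJ ζ hζ]
  unfold leviForm
  ring

end LeviForm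

/-- **Characterization of `J`-plurisubharmonic functions.** A `C²` real function `u` has
nonnegative Levi form `L^J(u)` on `Ω` if and only if `u ∘ f` is subharmonic (has
nonnegative Laplacian) for every `C²` `J`-holomorphic disc `f : Δ → Ω`. -/
theorem statement4 {n : ℕ}
    (Ω : Set (EuclideanSpace ℂ (Fin n))) (hΩ : IsOpen Ω)
    (J : EuclideanSpace ℂ (Fin n) →
      EuclideanSpace ℂ (Fin n) →L[ℝ] EuclideanSpace ℂ (Fin n))
    (hJ : IsACS Ω J)
    (u : EuclideanSpace ℂ (Fin n) → ℝ) (hu : ContDiffOn ℝ 2 u Ω) :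
    (∀ x ∈ Ω, ∀ X : EuclideanSpace ℂ (Fin n), 0 ≤ leviForm J u x X) ↔
    (∀ f : ℂ → EuclideanSpace ℂ (Fin n),
      ContDiffOn ℝ 2 f (ball (0 : ℂ) 1) → MapsTo f (ball (0 : ℂ) 1) Ω →
      (∀ ζ ∈ ball (0 : ℂ) 1,
        (fderiv ℝ f ζ).comp (Jst ℂ) = (J (f ζ)).comp (fderiv ℝ f ζ)) →
      ∀ ζ ∈ ball (0 : ℂ) 1, 0 ≤ lapR (fun w => u (f w)) ζ) := by
  have hJ2 : ∀ x ∈ Ω, ∀ v, J x (J x v) = -v := fun x hx v => DFunLike.congr_fun (hJ.sq x hx) v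
  constructor
  · intro h f hf hfΩ hfJ ζ hζ
    have hfJ' : ∀ z ∈ ball (0 : ℂ) 1, fderiv ℝ f z Complex.I = J (f z) (fderiv ℝ f z 1) := by
      intro z hz
      have := DFunLike.congr_fun (hfJ z hz) 1
      simpa [Jst] using this
    rw [lapR_comp_eq_leviForm hΩ hJ.smooth hJ2 hu isOpen_ball hf hfΩ hfJ' hζ]
    exact h _ (hfΩ hζ) _
  · intro h x hx X
    by_contra! hneg
    have hfin : FiniteDimensional ℝ (EuclideanSpace ℂ (Fin n)) :=
      FiniteDimensional.complexToReal _
    obtain ⟨ε, hε, hεneg⟩ := Metric.eventually_nhds_iff.mp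
      ((continuousAt_leviForm hΩ hJ.smooth hu hx X).eventually_lt_const hneg)
    obtain ⟨f, hf, hfΩ, hfJ, hf0, t, ht, Y, hfY, hY⟩ :=
      exists_small_disc hΩ hJ.smooth hJ.sq hx X hε
    have hlap := h f hf.contDiffOn hfΩ (fun z hz => ?_) 0 (mem_ball_self one_pos)
    · rw [lapR_comp_eq_leviForm hΩ hJ.smooth hJ2 hu isOpen_ball hf.contDiffOn hfΩ hfJ
        (mem_ball_self one_pos), hfY, leviForm_smul] at hlap
      have := hεneg (y := (f 0, Y)) (by
        rw [Prod.dist_eq, dist_eq_norm, dist_eq_norm]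
        exact max_lt hf0 hY)
      have := mul_neg_of_pos_of_neg (pow_pos ht 2) this
      linarith
    · refine ContinuousLinearMap.ext fun v => ?_
      have hI : ∀ v, fderiv ℝ f z (Complex.I * v) = J (f z) (fderiv ℝ f z v) := by
        intro v
        rw [fderiv_apply_eq_re_im _ (Complex.I * v), fderiv_apply_eq_re_im _ v, map_add, map_smul,
          map_smul, hfJ z hz, hJ2 _ (hfΩ hz)]
        simp [add_comm]
      simpa [Jst] using hI v

end
end
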